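/- arXiv:0908.1159 — 3 statements merged into one kernel-verified Lean document; each statement's English description precedes it below -/
import Mathlib

section
/- K_TBB(4) = 95: among all Turing machines with at most 4 states that halt on the all-zero tape with a computed word containing exactly BB(4) = 12 ones, the minimum number of steps taken before halting is exactly 95. -/
/-- Head movement directions. -/
inductive Dir : Type
  | left | stay | right

/-- Displacement of the head for each direction. -/
def Dir.move : Dir → ℤ
  | .left => -1
  | .stay => 0
  | .right => 1

/-- A configuration of a Turing machine with state type `Q`: current state,
head position and the two-way infinite binary tape. -/
structure Cfg (Q : Type) where
  state : Q
  head : ℤ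
  tape : ℤ → Bool

/-- One step of the machine with partial transition function `f`
(`none` if the machine halts, i.e. `f` is undefined on the current pair). -/
def stepTM {Q : Type} (f : Q × Bool → Option (Q × Bool × Dir)) (c : Cfg Q) :
    Option (Cfg Q) :=
  (f (c.state, c.tape c.head)).map fun qbd =>
    ⟨qbd.1, c.head + qbd.2.2.move, Function.update c.tape c.head qbd.2.1⟩

/-- Running `t` steps (returns `none` if the machine halts strictly before `t` steps). -/
def stepsTM {Q : Type} (f : Q × Bool → Option (Q × Bool × Dir)) :
    ℕ → Cfg Q → Option (Cfg Q)
  | 0, c => some c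
  | t + 1, c => (stepTM f c).bind (stepsTM f t)

/-- Initial configuration: initial state `q0`, head at `0`, all-zero tape. -/
def initCfg {Q : Type} (q0 : Q) : Cfg Q := ⟨q0, 0, fun _ => false⟩

/-- The machine is halted in configuration `c`: the transition function is
undefined on the current (state, symbol) pair. -/
def Halted {Q : Type} (f : Q × Bool → Option (Q × Bool × Dir)) (c : Cfg Q) : Prop :=
  f (c.state, c.tape c.head) = none

/-- `w` is the tape contents from the leftmost 1 to the rightmost 1
(the empty word if the tape contains no 1). -/
def TapeWord (tape : ℤ → Bool) (w : List Bool) : Prop :=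
  ∃ i : ℤ,
    (∀ k : ℕ, k < w.length → w.getD k false = tape (i + k)) ∧
    (∀ j : ℤ, tape j = true → i ≤ j ∧ j < i + w.length) ∧
    (w ≠ [] → w.getD 0 false = true ∧ w.getLastD false = true)

/-- The machine with transition function `f` and initial state `q0`, started on
the all-zero tape, halts after exactly `t` steps computing the word `w`. -/
def Computes {Q : Type} (f : Q × Bool → Option (Q × Bool × Dir)) (q0 : Q)
    (w : List Bool) (t : ℕ) : Prop :=
  ∃ c : Cfg Q, stepsTM f t (initCfg q0) = some c ∧ Halted f c ∧ TapeWord c.tape w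


namespace BB4

set_option linter.unusedSimpArgs false
set_option linter.unusedVariables false

/-- Eight bit planes, one for each (state, symbol) pair. -/
structure Row : Type where
  (a0 a1 a2 a3 a4 a5 a6 a7 : Nat)

/-- Select from the planes of `F` by the disjoint masks `E`. -/
noncomputable def sel (E F : Row) : Nat :=
  Row.rec (motive := fun _ => Nat) (fun e0 e1 e2 e3 e4 e5 e6 e7 =>
    Row.rec (motive := fun _ => Nat) (fun f0 f1 f2 f3 f4 f5 f6 f7 =>
      Nat.lor (Nat.lor (Nat.lor (Nat.land e0 f0) (Nat.land e1 f1))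
        (Nat.lor (Nat.land e2 f2) (Nat.land e3 f3)))
        (Nat.lor (Nat.lor (Nat.land e4 f4) (Nat.land e5 f5))
        (Nat.lor (Nat.land e6 f6) (Nat.land e7 f7)))) F) E

def mk3 (y0 y1 y2 y3 z0 z1 z2 z3 : Nat) : Row :=
  ⟨Nat.xor y0 z0, z0, Nat.xor y1 z1, z1, Nat.xor y2 z2, z2, Nat.xor y3 z3, z3⟩

def mk2 (c x0 x1 y1 y3 : Nat) : Row :=
  (fun y0 y2 => mk3 y0 y1 y2 y3 (Nat.land y0 c) (Nat.land y1 c) (Nat.land y2 c) (Nat.land y3 c))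
    (Nat.xor x0 y1) (Nat.xor x1 y3)

def mk1 (s0 c x0 x1 : Nat) : Row := mk2 c x0 x1 (Nat.land x0 s0) (Nat.land x1 s0)

/-- Masks of the lanes that are alive and in a given (state, symbol) pair. -/
def mkE (al s1 s0 c : Nat) : Row :=
  (fun x1 => mk1 s0 c (Nat.xor al x1) x1) (Nat.land al s1)

def mux (d x y : Nat) : Nat := Nat.xor y (Nat.land d (Nat.xor x y))

noncomputable def hd (l : List Nat) : Nat :=
  List.rec (motive := fun _ => Nat) 0 (fun x _ _ => x) l
noncomputable def tl (l : List Nat) : List Nat :=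
  List.rec (motive := fun _ => List Nat) [] (fun _ t _ => t) l

noncomputable def zm (d : Nat) (xs : List Nat) : List Nat → List Nat :=
  List.rec (motive := fun _ => List Nat → List Nat) (fun _ => [])
    (fun x _ ih ys => List.rec (motive := fun _ => List Nat)
      (Nat.land d x :: ih [])
      (fun y t _ => Nat.xor y (Nat.land d (Nat.xor x y)) :: ih t) ys) xs
noncomputable def zm' (d : Nat) (xs : List Nat) : List Nat → List Nat :=
  List.rec (motive := fun _ => List Nat → List Nat) (fun _ => [])
    (fun x _ ih ys => List.rec (motive := fun _ => List Nat)
      (Nat.xor x (Nat.land d x) :: ih [])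
      (fun y t _ => Nat.xor x (Nat.land d (Nat.xor x y)) :: ih t) ys) xs

/-- The five rows of planes that describe a batch of machines. -/
structure Prm : Type where
  (n1 n0 w d h : Row)

noncomputable def orRow (U E : Row) : Row :=
  Row.rec (motive := fun _ => Row) (fun e0 e1 e2 e3 e4 e5 e6 e7 =>
    Row.rec (motive := fun _ => Row) (fun f0 f1 f2 f3 f4 f5 f6 f7 =>
      ⟨Nat.lor e0 f0, Nat.lor e1 f1, Nat.lor e2 f2, Nat.lor e3 f3,
       Nat.lor e4 f4, Nat.lor e5 f5, Nat.lor e6 f6, Nat.lor e7 f7⟩) U) E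

noncomputable def allU (U : Row) : Nat :=
  Row.rec (motive := fun _ => Nat) (fun _ e1 _ e3 e4 e5 e6 e7 =>
    Nat.land e1 (Nat.land e3 (Nat.land e4 (Nat.land e5 (Nat.land e6 e7))))) U

/-- The type of the simulation loop. -/
abbrev Loop := Row → List Nat → List Nat → Nat → Nat → Nat → Nat → Nat → Nat → Nat → Nat → Bool

noncomputable def st4 (ih : Loop) (U : Row) (l r : List Nat)
    (c k0 k1 k2 k3 w d x s1 s0 al g0 g1 : Nat) : Bool :=
  Bool.rec (motive := fun _ => Bool)
  (ih U (zm d (w :: l) (tl l)) (zm' d (w :: r) (tl r)) (mux d (hd r) (hd l)) s1 s0 al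
    (Nat.xor k0 x) (Nat.xor k1 g0) (Nat.xor k2 g1) (Nat.xor k3 (Nat.land g1 (Nat.xor k2 c))))
  true (Nat.beq al 0)

noncomputable def st3 (ih : Loop) (U : Row) (l r : List Nat)
    (c k0 k1 k2 k3 w d x s1 s0 al : Nat) : Bool :=
  (fun g0 => st4 ih U l r c k0 k1 k2 k3 w d x s1 s0 al g0 (Nat.land g0 (Nat.xor k1 c)))
    (Nat.land x (Nat.xor k0 c))

/-- The lanes that halt with too many ones. -/
noncomputable def badm (U : Row) (k1 k2 k3 hm : Nat) : Nat :=
  Nat.land hm (Nat.land k3 (Nat.lor k2 (Nat.xor k1 (Nat.land k1 (allU U)))))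

noncomputable def st2 (ih : Loop) (P : Prm) (E U : Row) (l r : List Nat)
    (c al k0 k1 k2 k3 hm w : Nat) : Bool :=
  Bool.rec (motive := fun _ => Bool) false
    (st3 ih (orRow U E) l r c k0 k1 k2 k3 w (sel E P.d) (Nat.xor w (Nat.land al c))
      (sel E P.n1) (sel E P.n0) (Nat.xor al hm))
    (Nat.beq (badm U k1 k2 k3 hm) 0)

noncomputable def st1 (ih : Loop) (P : Prm) (U : Row) (l r : List Nat)
    (c al k0 k1 k2 k3 : Nat) (E : Row) : Bool :=
  st2 ih P E U l r c al k0 k1 k2 k3 (sel E P.h) (sel E P.w)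

noncomputable def loop (P : Prm) (n : Nat) : Loop :=
  Nat.rec (motive := fun _ => Loop) (fun _ _ _ _ _ _ _ _ _ _ _ => true)
    (fun _ ih U l r c s1 s0 al k0 k1 k2 k3 =>
      st1 ih P U l r c al k0 k1 k2 k3 (mkE al s1 s0 c)) n

/-- All `2 ^ m`  lanes set. -/
noncomputable def full (m : Nat) : Nat := Nat.rec (motive := fun _ => Nat) 1
  (fun m f => Nat.lor f (Nat.shiftLeft f (Nat.pow 2 m))) m

/-- The plane whose bit `j` is bit `k` of `j`. -/
noncomputable def pat (k : Nat) (m : Nat) : Nat := Nat.rec (motive := fun _ => Nat) 0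
  (fun m f => Bool.rec (motive := fun _ => Nat) (Nat.lor f (Nat.shiftLeft f (Nat.pow 2 m)))
     (Nat.shiftLeft (full m) (Nat.pow 2 m)) (Nat.beq k m)) m

noncomputable def cst (f : Nat) (b : Bool) : Nat := Bool.rec (motive := fun _ => Nat) 0 f b

/-- Plane of the variable number `v` in the batch `x` of `2 ^ m` lanes. -/
noncomputable def pl (m x v : Nat) : Nat :=
  Bool.rec (motive := fun _ => Nat) (cst (full m) (Nat.testBit x (v - m))) (pat v m) (Nat.blt v m)

/-- Position of the pair `p` in the list 1, 3, 4, 5, 6, 7. -/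
def idx (p : Nat) : Nat := bif Nat.beq p 1 then 0 else p - 2

/-- The slot of variables of the pair `p` if `h` is the halting pair. -/
def slot (h p : Nat) : Nat := bif Nat.beq p 7 then idx h else idx p

noncomputable def row (F : Nat → Nat) : Row := ⟨F 0, F 1, F 2, F 3, F 4, F 5, F 6, F 7⟩

noncomputable def fldF (m x h k : Nat) (a b : Bool) (p : Nat) : Nat :=
  bif Nat.beq p 0 then cst (full m) a else bif Nat.beq p 2 then cst (full m) b else
    bif Nat.beq p h then 0 else pl m x (4 * slot h p + k)

/-- Planes of a field; `a` is its value at the pair 0, `b` its value at the pair 2, `k` is the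
number of the field, `h` the halting pair. -/
noncomputable def fld (m x h k : Nat) (a b : Bool) : Row := row (fldF m x h k a b)

noncomputable def hrowF (m h p : Nat) : Nat := bif Nat.beq p h then full m else 0

noncomputable def hrow (m h : Nat) : Row := row (hrowF m h)

noncomputable def prm (m x h : Nat) (q1 q0 w d : Bool) : Prm :=
  ⟨fld m x h 0 false q1, fld m x h 1 true q0, fld m x h 2 true w, fld m x h 3 true d, hrow m h⟩

noncomputable def chk (m x h : Nat) (q1 q0 w d : Bool) : Bool :=
  loop (prm m x h q1 q0 w d) 95 (hrow m h) [] [] 0 0 0 (full m) 0 0 0 0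

theorem tb_land (x y i : Nat) : (Nat.land x y).testBit i = (x.testBit i && y.testBit i) :=
  Nat.testBit_and x y i
theorem tb_lor (x y i : Nat) : (Nat.lor x y).testBit i = (x.testBit i || y.testBit i) :=
  Nat.testBit_or x y i
theorem tb_xor (x y i : Nat) : (Nat.xor x y).testBit i = (x.testBit i ^^ y.testBit i) :=
  Nat.testBit_xor x y i

/-- The plane of a pair. -/
def Row.get (R : Row) (q : Fin 4) (s : Bool) : Nat :=
  match q, s with
  | 0, false => R.a0
  | 0, true => R.a1
  | 1, false => R.a2
  | 1, true => R.a3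
  | 2, false => R.a4
  | 2, true => R.a5
  | 3, false => R.a6
  | 3, true => R.a7

/-- High bit of a state. -/
def hi (q : Fin 4) : Bool := q.val.testBit 1
/-- Low bit of a state. -/
def lo (q : Fin 4) : Bool := q.val.testBit 0

theorem mkE_bit (al s1 s0 c j : Nat) (q : Fin 4) (s : Bool)
    (ha : al.testBit j = true) (h1 : s1.testBit j = hi q) (h0 : s0.testBit j = lo q)
    (hc : c.testBit j = s) (q' : Fin 4) (s' : Bool) :
    ((mkE al s1 s0 c).get q' s').testBit j = decide (q' = q ∧ s' = s) := by
  fin_cases q <;> cases s <;> fin_cases q' <;> cases s' <;>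
    simp [mkE, mk1, mk2, mk3, Row.get, tb_land, tb_xor, ha, h1, h0, hc, hi, lo] <;> decide

theorem sel_bit (E F : Row) (j : Nat) (q : Fin 4) (s : Bool)
    (h : ∀ q' s', (E.get q' s').testBit j = decide (q' = q ∧ s' = s)) :
    (sel E F).testBit j = (F.get q s).testBit j := by
  have h0 := h 0 false
  have h1 := h 0 true
  have h2 := h 1 false
  have h3 := h 1 true
  have h4 := h 2 false
  have h5 := h 2 true
  have h6 := h 3 false
  have h7 := h 3 true
  cases E
  cases F
  simp only [Row.get] at h0 h1 h2 h3 h4 h5 h6 h7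
  simp only [sel, tb_lor, tb_land, h0, h1, h2, h3, h4, h5, h6, h7]
  fin_cases q <;> cases s <;> simp [Row.get]

theorem orRow_bit (U E : Row) (j : Nat) (q : Fin 4) (s : Bool) :
    ((orRow U E).get q s).testBit j = ((E.get q s).testBit j || (U.get q s).testBit j) := by
  cases U
  cases E
  fin_cases q <;> cases s <;> simp [orRow, Row.get, tb_lor]

theorem allU_bit (U : Row) (j : Nat) (q : Fin 4) (s : Bool) (h0 : (q, s) ≠ (0, false))
    (h1 : (q, s) ≠ (1, false)) (h : (U.get q s).testBit j = false) :
    (allU U).testBit j = false := by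
  cases U
  fin_cases q <;> cases s <;> simp_all [allU, Row.get, tb_land]

/-- Transition functions without stay moves (`true` means right). -/
abbrev G := Fin 4 → Bool → Option (Fin 4 × Bool × Bool)
/-- Configurations with the tape relative to the head. -/
abbrev RC := Fin 4 × (ℤ → Bool)

/-- Write and move. -/
def mv (T : ℤ → Bool) (w d : Bool) : ℤ → Bool :=
  fun i => Function.update T 0 w (i + cond d 1 (-1))

def gsteps (g : G) : ℕ → RC → Option RC
  | 0, c => some c
  | t + 1, c => (g c.1 (c.2 0)).bind fun v => gsteps g t (v.1, mv c.2 v.2.1 v.2.2)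

/-- The tape has exactly `n` ones. -/
def Ones (T : ℤ → Bool) (n : ℕ) : Prop :=
  ∃ S : Finset ℤ, (∀ z, T z = true ↔ z ∈ S) ∧ S.card = n

theorem Ones.unique {T : ℤ → Bool} {n m : ℕ} (h : Ones T n) (h' : Ones T m) : n = m := by
  obtain ⟨S, hS, rfl⟩ := h
  obtain ⟨S', hS', rfl⟩ := h'
  congr 1
  ext z
  rw [← hS, ← hS']

theorem Ones.update {T : ℤ → Bool} {n : ℕ} (h : Ones T n) (w : Bool) :
    ∃ m, Ones (Function.update T 0 w) m ∧ m + (T 0).toNat = n + w.toNat := by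
  obtain ⟨S, hS, rfl⟩ := h
  have h0 := hS 0
  cases w
  · refine ⟨(S.erase 0).card, ⟨S.erase 0, fun z => ?_, rfl⟩, ?_⟩
    · by_cases hz : z = 0
      · simp [hz]
      · simp [hz, hS]
    · by_cases hm : (0 : ℤ) ∈ S
      · have := Finset.card_erase_add_one hm
        simp [h0.2 hm, this]
      · rw [Finset.erase_eq_of_notMem hm]
        have : T 0 = false := by simpa [hm] using h0
        simp [this]
  · refine ⟨(insert 0 S).card, ⟨insert 0 S, fun z => ?_, rfl⟩, ?_⟩
    · by_cases hz : z = 0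
      · simp [hz]
      · simp [hz, hS]
    · by_cases hm : (0 : ℤ) ∈ S
      · rw [Finset.insert_eq_of_mem hm]
        simp [h0.2 hm]
      · rw [Finset.card_insert_of_notMem hm]
        have : T 0 = false := by simpa [hm] using h0
        simp [this]

theorem Ones.shift {T : ℤ → Bool} {n : ℕ} (h : Ones T n) (a : ℤ) :
    Ones (fun i => T (i + a)) n := by
  obtain ⟨S, hS, rfl⟩ := h
  refine ⟨S.image (fun z => z - a), fun z => ?_,
    Finset.card_image_of_injective _ fun x y h => by simpa using h⟩
  simp only [hS, Finset.mem_image]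
  constructor
  · intro h
    exact ⟨_, h, by omega⟩
  · rintro ⟨y, hy, rfl⟩
    simpa using hy

theorem Ones.mv {T : ℤ → Bool} {n : ℕ} (h : Ones T n) (w d : Bool) :
    ∃ m, Ones (mv T w d) m ∧ m + (T 0).toNat = n + w.toNat := by
  obtain ⟨m, h1, h2⟩ := h.update w
  exact ⟨m, h1.shift _, h2⟩

theorem zm_bit (d j : Nat) (xs : List Nat) : ∀ (ys : List Nat) (i : Nat),
    ys.length ≤ xs.length →
    ((zm d xs ys).getD i 0).testBit j =
      cond (d.testBit j) ((xs.getD i 0).testBit j) ((ys.getD i 0).testBit j) := by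
  induction xs with
  | nil =>
    intro ys i h
    have : ys = [] := by simpa using h
    subst this
    simp [zm]
  | cons x xs ih =>
    intro ys i h
    cases ys with
    | nil =>
      have e : zm d (x :: xs) [] = Nat.land d x :: zm d xs [] := rfl
      rw [e]
      cases i with
      | zero => cases hd : d.testBit j <;> simp [tb_land, hd]
      | succ i => simpa using ih [] i (by simp)
    | cons y t =>
      have e : zm d (x :: xs) (y :: t) =
        Nat.xor y (Nat.land d (Nat.xor x y)) :: zm d xs t := rfl
      rw [e]
      cases i with
      | zero =>
        cases hd : d.testBit j <;> cases hx : x.testBit j <;> simp [tb_land, tb_xor, hd, hx]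
      | succ i => simpa using ih t i (by simpa using h)

theorem zm'_bit (d j : Nat) (xs : List Nat) : ∀ (ys : List Nat) (i : Nat),
    ys.length ≤ xs.length →
    ((zm' d xs ys).getD i 0).testBit j =
      cond (d.testBit j) ((ys.getD i 0).testBit j) ((xs.getD i 0).testBit j) := by
  induction xs with
  | nil =>
    intro ys i h
    have : ys = [] := by simpa using h
    subst this
    simp [zm']
  | cons x xs ih =>
    intro ys i h
    cases ys with
    | nil =>
      have e : zm' d (x :: xs) [] = Nat.xor x (Nat.land d x) :: zm' d xs [] := rfl
      rw [e]
      cases i with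
      | zero =>
        cases hd : d.testBit j <;> cases hx : x.testBit j <;> simp [tb_land, tb_xor, hd, hx]
      | succ i => simpa using ih [] i (by simp)
    | cons y t =>
      have e : zm' d (x :: xs) (y :: t) =
        Nat.xor x (Nat.land d (Nat.xor x y)) :: zm' d xs t := rfl
      rw [e]
      cases i with
      | zero =>
        cases hd : d.testBit j <;> cases hx : x.testBit j <;> simp [tb_land, tb_xor, hd, hx]
      | succ i => simpa using ih t i (by simpa using h)

theorem tl_getD (l : List Nat) (i : Nat) : (tl l).getD i 0 = l.getD (i + 1) 0 := by
  cases l <;> simp [tl]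
theorem hd_eq (l : List Nat) : hd l = l.getD 0 0 := by
  cases l <;> simp [hd]
theorem tl_len (l : List Nat) : (tl l).length ≤ l.length := by
  cases l <;> simp [tl]

/-- The planes `P` describe `g` on the lane `j`, with halting pair `h`. -/
structure PrmOK (P : Prm) (g : G) (h : Fin 4 × Bool) (j : Nat) : Prop where
  tr : ∀ q s q' w d, (q, s) ≠ h → g q s = some (q', w, d) →
    (P.n1.get q s).testBit j = hi q' ∧ (P.n0.get q s).testBit j = lo q' ∧
    (P.w.get q s).testBit j = w ∧ (P.d.get q s).testBit j = d
  hh : ∀ q s, (P.h.get q s).testBit j = decide ((q, s) = h)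

/-- The planes of the simulation describe the configuration `(q, T)` on the lane `j`. -/
structure Inv (g : G) (h : Fin 4 × Bool) (j : Nat) (q : Fin 4) (T : ℤ → Bool)
    (U : Row) (l r : List Nat) (c s1 s0 al k0 k1 k2 k3 : Nat) : Prop where
  hal : al.testBit j = true
  h1 : s1.testBit j = hi q
  h0 : s0.testBit j = lo q
  hc : c.testBit j = T 0
  hl : ∀ i : ℕ, (l.getD i 0).testBit j = T (-1 - i)
  hr : ∀ i : ℕ, (r.getD i 0).testBit j = T (1 + i)
  hU : ∀ q s, (q, s) ≠ h → g q s = none → (U.get q s).testBit j = false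
  hn : ∃ n, Ones T n ∧ k0.testBit j = n.testBit 0 ∧ k1.testBit j = n.testBit 1 ∧
    k2.testBit j = n.testBit 2 ∧ k3.testBit j = n.testBit 3

/-- What we want to exclude about the configuration in which `g` halts. -/
def BadCfg (g : G) (q : Fin 4) (T : ℤ → Bool) : Prop :=
  g q (T 0) = none ∧ ∃ n, Ones T n ∧ (n = 12 ∨ ((n = 11 ∨ n = 12 ∨ n = 13) ∧
    ∃ q' s', (q', s') ≠ (q, T 0) ∧ g q' s' = none))

theorem count_bits (n m : ℕ) (t w : Bool) (h : m + t.toNat = n + w.toNat) :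
    let x := w ^^ t
    let g0 := x && (n.testBit 0 ^^ t)
    let g1 := g0 && (n.testBit 1 ^^ t)
    m.testBit 0 = (n.testBit 0 ^^ x) ∧ m.testBit 1 = (n.testBit 1 ^^ g0) ∧
    m.testBit 2 = (n.testBit 2 ^^ g1) ∧
    m.testBit 3 = (n.testBit 3 ^^ (g1 && (n.testBit 2 ^^ t))) := by
  have key : ∀ a b : ℕ, a % 16 = b → ∀ i < 4, a.testBit i = b.testBit i := by
    intro a b hab i hi
    rw [← hab, show (16 : ℕ) = 2 ^ 4 from rfl, Nat.testBit_mod_two_pow]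
    simp [hi]
  have hn := key n _ rfl
  have hm := key m _ rfl
  have hlt : n % 16 < 16 := Nat.mod_lt _ (by norm_num)
  have hmod : (m % 16 + t.toNat) % 16 = (n % 16 + w.toNat) % 16 := by omega
  have hlt' : m % 16 < 16 := Nat.mod_lt _ (by norm_num)
  rw [hm 0 (by norm_num), hm 1 (by norm_num), hm 2 (by norm_num), hm 3 (by norm_num),
    hn 0 (by norm_num), hn 1 (by norm_num), hn 2 (by norm_num), hn 3 (by norm_num)]
  generalize n % 16 = a at *
  generalize m % 16 = b at *
  clear hn hm key h
  revert a b t w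
  decide

theorem loop_sound (P : Prm) (g : G) (h : Fin 4 × Bool) (j : Nat) (hP : PrmOK P g h j)
    (hg : g h.1 h.2 = none) (hA : g 0 false ≠ none) (hB : g 1 false ≠ none) :
    ∀ (N : ℕ) (q : Fin 4) (T : ℤ → Bool) (U : Row) (l r : List Nat)
      (c s1 s0 al k0 k1 k2 k3 : Nat),
    loop P N U l r c s1 s0 al k0 k1 k2 k3 = true →
    Inv g h j q T U l r c s1 s0 al k0 k1 k2 k3 →
    ∀ t, t < N → ∀ q' T', gsteps g t (q, T) = some (q', T') → (q', T' 0) = h →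
    ¬ BadCfg g q' T' := by
  intro N
  induction N with
  | zero => intro q T U l r c s1 s0 al k0 k1 k2 k3 _ _ t ht; omega
  | succ N ih =>
    intro q T U l r c s1 s0 al k0 k1 k2 k3 hrun I t ht q' T' hs hh hbad
    have e : loop P (N + 1) U l r c s1 s0 al k0 k1 k2 k3 =
      st1 (loop P N) P U l r c al k0 k1 k2 k3 (mkE al s1 s0 c) := rfl
    rw [e] at hrun
    clear e
    have hE := mkE_bit al s1 s0 c j q (T 0) I.hal I.h1 I.h0 I.hc
    generalize mkE al s1 s0 c = E at hE hrun
    have hsel := fun F => sel_bit E F j q (T 0) hE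
    unfold st1 st2 at hrun
    have hb : Nat.beq (badm U k1 k2 k3 (sel E P.h)) 0 = true := by
      cases hx : Nat.beq (badm U k1 k2 k3 (sel E P.h)) 0
      · rw [hx] at hrun
        exact absurd hrun (by simp)
      · rfl
    rw [hb] at hrun
    have hb0 : badm U k1 k2 k3 (sel E P.h) = 0 := Nat.eq_of_beq_eq_true hb
    have hbj : (badm U k1 k2 k3 (sel E P.h)).testBit j = false := by rw [hb0]; simp
    obtain ⟨n, hn, hk0, hk1, hk2, hk3⟩ := I.hn
    cases t with
    | zero =>
      simp only [gsteps, Option.some.injEq, Prod.mk.injEq] at hs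
      obtain ⟨rfl, rfl⟩ := hs
      have hm : (sel E P.h).testBit j = true := by
        rw [hsel, hP.hh, hh]; simp
      obtain ⟨-, m, hm', hcase⟩ := hbad
      have := hm'.unique hn
      subst this
      simp only [badm, tb_land, tb_lor, tb_xor, hm, hk1, hk2, hk3] at hbj
      rcases hcase with rfl | ⟨hnn, q2, s2, hne, hnone⟩
      · revert hbj
        simp [show Nat.testBit 12 3 = true by decide, show Nat.testBit 12 2 = true by decide]
      · have : (allU U).testBit j = false := by
          apply allU_bit U j q2 s2
          · rintro ⟨⟩; exact hA hnone
          · rintro ⟨⟩; exact hB hnone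
          · exact I.hU q2 s2 (by rw [← hh]; exact hne) hnone
        rw [this] at hbj
        rcases hnn with rfl | rfl | rfl <;> revert hbj <;> decide
    | succ t =>
      simp only [gsteps] at hs
      cases hv : g q (T 0) with
      | none => rw [hv] at hs; simp at hs
      | some v =>
        obtain ⟨p, w, d⟩ := v
        rw [hv] at hs
        simp only [Option.bind_some] at hs
        have hne : (q, T 0) ≠ h := by
          rintro rfl
          simp [hv] at hg
        obtain ⟨t1, t2, t3, t4⟩ := hP.tr q (T 0) p w d hne hv
        rw [← hsel] at t1 t2 t3 t4
        have t5 : (sel E P.h).testBit j = false := by rw [hsel, hP.hh]; simp [hne]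
        generalize sel E P.h = hm at *
        generalize sel E P.n1 = n1 at *
        generalize sel E P.n0 = n0 at *
        generalize sel E P.w = ww at *
        generalize sel E P.d = dd at *
        have hal' : (Nat.xor al hm).testBit j = true := by simp [tb_xor, I.hal, t5]
        have hz : Nat.beq (Nat.xor al hm) 0 = false := by
          cases hx : Nat.beq (Nat.xor al hm) 0
          · rfl
          · rw [Nat.eq_of_beq_eq_true hx] at hal'
            simp at hal'
        simp only [st3, st4, hz] at hrun
        refine ih p (mv T w d) _ _ _ _ _ _ _ _ _ _ _ hrun ?_ t (by omega) q' T' hs hh hbad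
        obtain ⟨m, hm1, hm2⟩ := hn.mv w d
        have cb := count_bits n m (T 0) w hm2
        refine ⟨hal', t1, t2, ?_, ?_, ?_, ?_, m, hm1, ?_⟩
        · simp only [mux, tb_xor, tb_land, t4, hd_eq, I.hl, I.hr, mv]
          cases d <;> cases h3 : T 1 <;> simp [h3]
        · intro i
          rw [zm_bit _ _ _ _ _ ((tl_len l).trans (by simp)), t4, tl_getD, I.hl]
          cases d
          · simp only [mv, cond_false]
            rw [Function.update_of_ne (by omega)]
            congr 1; push_cast; ring
          · cases i with
            | zero => simp [mv, t3]
            | succ i =>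
              simp only [List.getD_cons_succ, I.hl, mv, cond_true]
              rw [Function.update_of_ne (by push_cast; omega)]
              congr 1; push_cast; ring
        · intro i
          rw [zm'_bit _ _ _ _ _ ((tl_len r).trans (by simp)), t4, tl_getD, I.hr]
          cases d
          · cases i with
            | zero => simp [mv, t3]
            | succ i =>
              simp only [List.getD_cons_succ, I.hr, mv, cond_false]
              rw [Function.update_of_ne (by push_cast; omega)]
              congr 1; push_cast; ring
          · simp only [mv, cond_true]
            rw [Function.update_of_ne (by omega)]
            congr 1
        · intro q2 s2 h2 hnone
          rw [orRow_bit, I.hU q2 s2 h2 hnone, hE]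
          simp only [Bool.or_false, decide_eq_false_iff_not]
          rintro ⟨rfl, rfl⟩
          rw [hv] at hnone
          simp at hnone
        · simp only [tb_xor, tb_land, hk0, hk1, hk2, hk3, t3, I.hal, I.hc, Bool.true_and]
          exact ⟨cb.1.symm, cb.2.1.symm, cb.2.2.1.symm, cb.2.2.2.symm⟩

theorem full_bit (m j : Nat) (hj : j < 2 ^ m) : (full m).testBit j = true := by
  induction m generalizing j with
  | zero =>
    have : j = 0 := by simpa using hj
    subst this
    rfl
  | succ m ih =>
    have e : full (m + 1) = full m ||| (full m) <<< (2 ^ m) := rfl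
    rw [e, Nat.testBit_or, Nat.testBit_shiftLeft]
    by_cases h : j < 2 ^ m
    · simp [ih j h]
    · rw [pow_succ] at hj
      simp [ih (j - 2 ^ m) (by omega), not_lt.1 h]

theorem full_bit' (m j : Nat) (hj : 2 ^ m ≤ j) : (full m).testBit j = false := by
  induction m generalizing j with
  | zero =>
    have e : full 0 = 1 := rfl
    rw [e]
    cases hb : Nat.testBit 1 j
    · rfl
    · have := Nat.testBit_one_eq_true_iff_self_eq_zero.1 hb
      simp [this] at hj
  | succ m ih =>
    have e : full (m + 1) = full m ||| (full m) <<< (2 ^ m) := rfl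
    rw [pow_succ] at hj
    rw [e, Nat.testBit_or, Nat.testBit_shiftLeft, ih j (by omega), ih _ (by omega)]
    simp

theorem pat_bit' (k m j : Nat) (hj : 2 ^ m ≤ j) : (pat k m).testBit j = false := by
  induction m generalizing j with
  | zero =>
    have e : pat k 0 = 0 := rfl
    rw [e]; simp
  | succ m ih =>
    have e : pat k (m + 1) = Bool.rec (motive := fun _ => Nat)
      (pat k m ||| (pat k m) <<< (2 ^ m)) ((full m) <<< (2 ^ m)) (Nat.beq k m) := rfl
    rw [pow_succ] at hj
    rw [e]
    cases Nat.beq k m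
    · simp only [Nat.testBit_or, Nat.testBit_shiftLeft, ih j (by omega), ih (j - 2 ^ m) (by omega)]
      simp
    · simp only [Nat.testBit_shiftLeft, full_bit' m (j - 2 ^ m) (by omega)]
      simp

theorem pat_bit (k m j : Nat) (hk : k < m) (hj : j < 2 ^ m) :
    (pat k m).testBit j = j.testBit k := by
  induction m generalizing j with
  | zero => omega
  | succ m ih =>
    have e : pat k (m + 1) = Bool.rec (motive := fun _ => Nat)
      (pat k m ||| (pat k m) <<< (2 ^ m)) ((full m) <<< (2 ^ m)) (Nat.beq k m) := rfl
    rw [pow_succ] at hj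
    rw [e]
    cases hb : Nat.beq k m
    · have hne : k ≠ m := Nat.ne_of_beq_eq_false hb
      simp only [Nat.testBit_or, Nat.testBit_shiftLeft]
      by_cases h : j < 2 ^ m
      · simp [ih j (by omega) h, not_le.2 h]
      · rw [pat_bit' k m j (by omega), ih (j - 2 ^ m) (by omega) (by omega)]
        have : j = 2 ^ m * 1 + (j - 2 ^ m) := by omega
        conv_rhs => rw [this]
        rw [Nat.testBit_two_pow_mul_add 1 (by omega)]
        simp [not_lt.1 h, show k < m by omega]
    · have : k = m := Nat.eq_of_beq_eq_true hb
      subst this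
      simp only [Nat.testBit_shiftLeft]
      by_cases h : j < 2 ^ k
      · simp [h, Nat.testBit_lt_two_pow h]
      · rw [full_bit k (j - 2 ^ k) (by omega)]
        have : j = 2 ^ k * 1 + (j - 2 ^ k) := by omega
        conv_rhs => rw [this]
        rw [Nat.testBit_two_pow_mul_add 1 (by omega)]
        simp [not_lt.1 h]

theorem pl_bit (m x v j : Nat) (hj : j < 2 ^ m) :
    (pl m x v).testBit j = (2 ^ m * x + j).testBit v := by
  rw [Nat.testBit_two_pow_mul_add x hj]
  unfold pl
  cases hb : Nat.blt v m
  · have : ¬ v < m := by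
      intro h
      rw [← Nat.blt_eq] at h
      simp [hb] at h
    rw [if_neg this]
    cases hx : x.testBit (v - m)
    · simp [cst]
    · simp [cst, full_bit m j hj]
  · have : v < m := by rwa [← Nat.blt_eq]
    rw [if_pos this]
    exact pat_bit v m j this hj

/-- Number of a pair. -/
def code (h : Fin 4 × Bool) : Nat := 2 * h.1.val + h.2.toNat

theorem row_get (F : Nat → Nat) (q : Fin 4) (s : Bool) : (row F).get q s = F (code (q, s)) := by
  fin_cases q <;> cases s <;> rfl

/-- The pair in the slot `a`. -/
def slotInv (h : Fin 4 × Bool) (a : Nat) : Fin 4 × Bool :=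
  if a = idx (code h) then (3, true) else
    match a with
    | 0 => (0, true)
    | 1 => (1, true)
    | 2 => (2, false)
    | 3 => (2, true)
    | _ => (3, false)

theorem slotInv_slot : ∀ h p : Fin 4 × Bool, h ≠ (0, false) → h ≠ (1, false) → p ≠ (0, false) →
    p ≠ (1, false) → p ≠ h →
    slotInv h (slot (code h) (code p)) = p ∧ slot (code h) (code p) < 5 := by
  decide

/-- The bit number `k` of a transition. -/
def tbit (v : Option (Fin 4 × Bool × Bool)) (k : Nat) : Bool :=
  match v with
  | none => false
  | some (q, w, d) =>
    match k with
    | 0 => hi q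
    | 1 => lo q
    | 2 => w
    | _ => d

theorem code_inj : ∀ p h : Fin 4 × Bool, (Nat.beq (code p) (code h)) = decide (p = h) := by
  decide

theorem fld_bit (g : G) (h : Fin 4 × Bool) (m x j k : Nat) (hj : j < 2 ^ m) (hk : k < 4)
    (h0 : h ≠ (0, false)) (h1 : h ≠ (1, false))
    (hx : ∀ v < 20, (2 ^ m * x + j).testBit v =
      tbit (g (slotInv h (v / 4)).1 (slotInv h (v / 4)).2) (v % 4))
    (q : Fin 4) (s : Bool) (hne : (q, s) ≠ h) :
    ((fld m x (code h) k (tbit (g 0 false) k) (tbit (g 1 false) k)).get q s).testBit j =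
      tbit (g q s) k := by
  unfold fld
  rw [row_get]
  unfold fldF
  have c0 := code_inj (q, s) (0, false)
  have c1 := code_inj (q, s) (1, false)
  have c2 := code_inj (q, s) h
  rw [show code (0, false) = 0 from rfl] at c0
  rw [show code (1, false) = 2 from rfl] at c1
  have hcst : ∀ b, (cst (full m) b).testBit j = b := by
    intro b
    cases b
    · simp [cst]
    · simp [cst, full_bit m j hj]
  rw [c0, c1, c2]
  by_cases e0 : (q, s) = (0, false)
  · obtain ⟨rfl, rfl⟩ := Prod.mk.inj e0
    simp [hcst]
  by_cases e1 : (q, s) = (1, false)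
  · obtain ⟨rfl, rfl⟩ := Prod.mk.inj e1
    simp [hcst]
  simp only [e0, e1, hne, decide_false, cond_false]
  obtain ⟨i1, i2⟩ := slotInv_slot h (q, s) h0 h1 e0 e1 hne
  rw [pl_bit _ _ _ _ hj, hx _ (by omega)]
  have a1 : (4 * slot (code h) (code (q, s)) + k) / 4 = slot (code h) (code (q, s)) := by omega
  have a2 : (4 * slot (code h) (code (q, s)) + k) % 4 = k := by omega
  rw [a1, a2, i1]

theorem hrow_bit (m j : Nat) (hj : j < 2 ^ m) (h : Fin 4 × Bool) (q : Fin 4) (s : Bool) :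
    ((hrow m (code h)).get q s).testBit j = decide ((q, s) = h) := by
  unfold hrow
  rw [row_get]
  unfold hrowF
  rw [code_inj]
  by_cases e : (q, s) = h
  · simp [e, full_bit m j hj]
  · simp [e]

/-- The blank tape. -/
def blank : ℤ → Bool := fun _ => false

theorem ones_blank : Ones blank 0 := ⟨∅, by simp [blank], rfl⟩

/-- If all batches of a family pass, then no machine of the family is bad. -/
theorem batch (g : G) (m : ℕ) (hm : m ≤ 20) (bq : Fin 4) (bw bd : Bool)
    (hA : g 0 false = some (1, true, true)) (hB : g 1 false = some (bq, bw, bd))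
    (H : ∀ x < 2 ^ (20 - m), ∀ h : Fin 4 × Bool, h ≠ (0, false) → h ≠ (1, false) →
      chk m x (code h) (hi bq) (lo bq) bw bd = true)
    (t : ℕ) (ht : t < 95) (q : Fin 4) (T : ℤ → Bool)
    (hs : gsteps g t (0, blank) = some (q, T)) : ¬ BadCfg g q T := by
  intro hbad
  have hnone := hbad.1
  have h0 : (q, T 0) ≠ (0, false) := by
    intro e
    obtain ⟨e1, e2⟩ := Prod.mk.inj e
    rw [e1, e2, hA] at hnone
    simp at hnone
  have h1 : (q, T 0) ≠ (1, false) := by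
    intro e
    obtain ⟨e1, e2⟩ := Prod.mk.inj e
    rw [e1, e2, hB] at hnone
    simp at hnone
  let b : Fin 20 → Bool := fun v =>
    tbit (g (slotInv (q, T 0) (v.val / 4)).1 (slotInv (q, T 0) (v.val / 4)).2) (v.val % 4)
  let J := Nat.ofBits b
  have hJ : J < 2 ^ 20 := Nat.ofBits_lt_two_pow b
  have hJx : 2 ^ m * (J / 2 ^ m) + J % 2 ^ m = J := Nat.div_add_mod J (2 ^ m)
  have hj : J % 2 ^ m < 2 ^ m := Nat.mod_lt _ (by positivity)
  have hx : J / 2 ^ m < 2 ^ (20 - m) := by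
    rw [Nat.div_lt_iff_lt_mul (by positivity), ← pow_add]
    convert hJ using 2
    omega
  have hbits : ∀ v < 20, (2 ^ m * (J / 2 ^ m) + J % 2 ^ m).testBit v =
      tbit (g (slotInv (q, T 0) (v / 4)).1 (slotInv (q, T 0) (v / 4)).2) (v % 4) := by
    intro v hv
    rw [hJx]
    exact Nat.testBit_ofBits_lt b v hv
  have hc := H _ hx (q, T 0) h0 h1
  generalize J / 2 ^ m = x at *
  generalize J % 2 ^ m = j at *
  have fb := fun k hk => fld_bit g (q, T 0) m x j k hj hk h0 h1 hbits
  have hP : PrmOK (prm m x (code (q, T 0)) (hi bq) (lo bq) bw bd) g (q, T 0) j := by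
    constructor
    · intro q1 s1 q2 w d hne hg
      have f0 := fb 0 (by norm_num) q1 s1 hne
      have f1 := fb 1 (by norm_num) q1 s1 hne
      have f2 := fb 2 (by norm_num) q1 s1 hne
      have f3 := fb 3 (by norm_num) q1 s1 hne
      rw [hg, hA, hB] at f0 f1 f2 f3
      exact ⟨f0, f1, f2, f3⟩
    · exact hrow_bit m j hj (q, T 0)
  refine loop_sound _ g (q, T 0) j hP hnone (by simp [hA]) (by simp [hB]) 95 0 blank
    _ _ _ _ _ _ _ _ _ _ _ hc ?_ t ht q T hs rfl hbad
  refine ⟨full_bit m j hj, by simp [hi], by simp [lo], by simp [blank], by simp [blank],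
    by simp [blank], ?_, 0, ones_blank, by simp, by simp, by simp, by simp⟩
  intro q1 s1 hne _
  rw [hrow_bit m j hj]
  simp [hne]

set_option maxHeartbeats 4000000 in
/-- The bounded brute force search: 192 batches of `2 ^ 18` machines each. -/
theorem checks (i : ℕ) (hi : i < 192) :
    chk 18 (i % 4) (bif Nat.beq (i / 4 % 6) 0 then 1 else i / 4 % 6 + 2)
      (Nat.ble 4 (i / 24)) (Nat.beq (i / 48) 1) (Nat.beq (i / 24 % 2) 1) (Nat.beq (i / 48) 3) =
      true := by
  interval_cases i <;> decide +kernel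

/-- The transitions of state 1 on a blank cell that have to be searched. -/
def nodeOf (bq : Fin 4) (bd : Bool) : ℕ :=
  if bd then 3 else bq.val

theorem checks' (bq : Fin 4) (bw bd : Bool)
    (hb : (bd = false ∧ bq ≠ 3) ∨ (bd = true ∧ bq = 2)) (x : ℕ) (hx : x < 4)
    (h : Fin 4 × Bool) (h0 : h ≠ (0, false)) (h1 : h ≠ (1, false)) :
    chk 18 x (code h) (hi bq) (lo bq) bw bd = true := by
  have key : ∃ i, i < 192 ∧ i % 4 = x ∧
      (bif Nat.beq (i / 4 % 6) 0 then 1 else i / 4 % 6 + 2) = code h ∧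
      Nat.ble 4 (i / 24) = hi bq ∧ Nat.beq (i / 48) 1 = lo bq ∧ Nat.beq (i / 24 % 2) 1 = bw ∧
      Nat.beq (i / 48) 3 = bd := by
    refine ⟨48 * nodeOf bq bd + 24 * bw.toNat + 4 * idx (code h) + x, ?_⟩
    interval_cases x <;> revert bq bw bd h <;> decide +kernel
  obtain ⟨i, hi1, e1, e2, e3, e4, e5, e6⟩ := key
  have := checks i hi1
  rwa [e1, e2, e3, e4, e5, e6] at this

theorem batch' (g : G) (bq : Fin 4) (bw bd : Bool) (hA : g 0 false = some (1, true, true))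
    (hB : g 1 false = some (bq, bw, bd))
    (hb : (bd = false ∧ bq ≠ 3) ∨ (bd = true ∧ bq = 2))
    (t : ℕ) (ht : t < 95) (q : Fin 4) (T : ℤ → Bool)
    (hs : gsteps g t (0, blank) = some (q, T)) : ¬ BadCfg g q T :=
  batch g 18 (by norm_num) bq bw bd hA hB
    (fun x hx h h0 h1 => checks' bq bw bd hb x hx h h0 h1) t ht q T hs

/-- `g`, started in state `q0` on the blank tape, halts badly at time `t`. -/
def BadAt (g : G) (q0 : Fin 4) (t : ℕ) : Prop :=
  ∃ q T, gsteps g t (q0, blank) = some (q, T) ∧ BadCfg g q T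

theorem gsteps_ones (g : G) (t : ℕ) : ∀ (q : Fin 4) (T : ℤ → Bool) (n : ℕ), Ones T n →
    ∀ q' T', gsteps g t (q, T) = some (q', T') → ∃ m, Ones T' m ∧ m ≤ n + t := by
  induction t with
  | zero =>
    intro q T n hn q' T' h
    simp only [gsteps, Option.some.injEq, Prod.mk.injEq] at h
    exact ⟨n, h.2 ▸ hn, le_rfl⟩
  | succ t ih =>
    intro q T n hn q' T' h
    simp only [gsteps] at h
    cases hv : g q (T 0) with
    | none => simp [hv] at h
    | some v =>
      rw [hv] at h
      obtain ⟨m, hm, e⟩ := hn.mv v.2.1 v.2.2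
      obtain ⟨k, hk, e'⟩ := ih _ _ m hm q' T' h
      have := Bool.toNat_le v.2.1
      exact ⟨k, hk, by omega⟩

theorem BadAt.le {g : G} {q0 : Fin 4} {t : ℕ} (h : BadAt g q0 t) : 11 ≤ t := by
  obtain ⟨q, T, hs, -, n, hn, hc⟩ := h
  obtain ⟨m, hm, e⟩ := gsteps_ones g t _ _ 0 ones_blank _ _ hs
  have := hm.unique hn
  omega

/-- A machine that moves in one direction over blank cells does not halt. -/
theorem nonhalt (g : G) (Z : Fin 4 → Prop) (d : Bool)
    (hZ : ∀ q, Z q → ∃ q' w, g q false = some (q', w, d) ∧ Z q') (t : ℕ) :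
    ∀ (q : Fin 4) (T : ℤ → Bool), Z q → (∀ i : ℕ, T (cond d i (-i)) = false) →
    ∀ q' T', gsteps g t (q, T) = some (q', T') → g q' (T' 0) ≠ none := by
  induction t with
  | zero =>
    intro q T hq hT q' T' h
    simp only [gsteps, Option.some.injEq, Prod.mk.injEq] at h
    obtain ⟨rfl, rfl⟩ := h
    have h0 := hT 0
    obtain ⟨q', w, e, -⟩ := hZ q hq
    have : T 0 = false := by cases d <;> simpa using h0
    simp [this, e]
  | succ t ih =>
    intro q T hq hT q' T' h
    have h0 := hT 0
    obtain ⟨p, w, e, hp⟩ := hZ q hq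
    have h00 : T 0 = false := by cases d <;> simpa using h0
    simp only [gsteps, h00, e, Option.bind_some] at h
    refine ih p _ hp (fun i => ?_) q' T' h
    have hi := hT (i + 1)
    cases d
    · simp only [mv, cond_false] at *
      rw [Function.update_of_ne (by omega), ← hi]
      congr 1; push_cast; ring
    · simp only [mv, cond_true] at *
      rw [Function.update_of_ne (by omega), ← hi]
      congr 1

theorem not_bad_of_nonhalt (g : G) (Z : Fin 4 → Prop) (d : Bool) (q0 : Fin 4) (h0 : Z q0)
    (hZ : ∀ q, Z q → ∃ q' w, g q false = some (q', w, d) ∧ Z q') (t : ℕ) : ¬ BadAt g q0 t := by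
  rintro ⟨q, T, hs, hb, -⟩
  exact nonhalt g Z d hZ t q0 blank h0 (fun _ => rfl) q T hs hb

/-- Reflection of a tape. -/
def flipT (m : Bool) (T : ℤ → Bool) : ℤ → Bool := fun i => T (cond m (-i) i)

/-- Renaming of states and reflection of a machine. -/
def conj (σ : Equiv.Perm (Fin 4)) (m : Bool) (g : G) : G := fun q s =>
  (g (σ.symm q) s).map fun v => (σ v.1, v.2.1, v.2.2 ^^ m)

theorem flipT_zero (m : Bool) (T : ℤ → Bool) : flipT m T 0 = T 0 := by
  cases m <;> simp [flipT]

theorem flipT_mv (m : Bool) (T : ℤ → Bool) (w d : Bool) :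
    flipT m (mv T w d) = mv (flipT m T) w (d ^^ m) := by
  funext i
  cases m
  · have e : flipT false T = T := rfl
    rw [e]
    simp [flipT, mv]
  · have e : ∀ a b : ℤ, a = -b → Function.update T 0 w a =
        Function.update (fun i => T (-i)) 0 w b := by
      rintro a b rfl
      by_cases h : b = 0
      · simp [h]
      · rw [Function.update_of_ne (by omega), Function.update_of_ne h]
    simp only [flipT, mv, cond_true]
    apply e
    cases d <;> simp <;> ring

theorem gsteps_conj (σ : Equiv.Perm (Fin 4)) (m : Bool) (g : G) (t : ℕ) :
    ∀ (q : Fin 4) (T : ℤ → Bool) q' T', gsteps g t (q, T) = some (q', T') →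
    gsteps (conj σ m g) t (σ q, flipT m T) = some (σ q', flipT m T') := by
  induction t with
  | zero =>
    intro q T q' T' h
    simp only [gsteps, Option.some.injEq, Prod.mk.injEq] at h ⊢
    obtain ⟨rfl, rfl⟩ := h
    exact ⟨rfl, rfl⟩
  | succ t ih =>
    intro q T q' T' h
    simp only [gsteps] at h ⊢
    cases hv : g q (T 0) with
    | none => simp [hv] at h
    | some v =>
      rw [hv] at h
      have := ih _ _ _ _ h
      rw [flipT_mv] at this
      simpa [conj, flipT_zero, hv] using this

theorem Ones.flip {T : ℤ → Bool} {n : ℕ} (h : Ones T n) (m : Bool) : Ones (flipT m T) n := by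
  cases m
  · exact h
  · obtain ⟨S, hS, rfl⟩ := h
    refine ⟨S.image (fun z => -z), fun z => ?_,
      Finset.card_image_of_injective _ neg_injective⟩
    simp only [flipT, hS, Finset.mem_image, cond_true]
    constructor
    · intro h
      exact ⟨_, h, by omega⟩
    · rintro ⟨y, hy, rfl⟩
      simpa using hy

theorem BadAt.conj {g : G} {q0 : Fin 4} {t : ℕ} (h : BadAt g q0 t) (σ : Equiv.Perm (Fin 4))
    (m : Bool) : BadAt (conj σ m g) (σ q0) t := by
  obtain ⟨q, T, hs, hb, n, hn, hc⟩ := h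
  refine ⟨σ q, flipT m T, ?_, ?_, n, hn.flip m, ?_⟩
  · exact gsteps_conj σ m g t q0 blank q T hs
  · simp [BB4.conj, flipT_zero, hb]
  · refine hc.imp id (And.imp id ?_)
    rintro ⟨q', s', hne, hnone⟩
    refine ⟨σ q', s', ?_, by simp [BB4.conj, hnone]⟩
    rw [flipT_zero]
    intro e
    apply hne
    simpa using e

theorem BadAt.step {g : G} {q0 q1 : Fin 4} {t : ℕ} {w d : Bool} (h : BadAt g q0 (t + 1))
    (e : g q0 false = some (q1, w, d)) :
    ∃ q T, gsteps g t (q1, mv blank w d) = some (q, T) ∧ BadCfg g q T := by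
  obtain ⟨q, T, hs, hb⟩ := h
  have : (blank 0) = false := rfl
  simp only [gsteps, this, e, Option.bind_some] at hs
  exact ⟨q, T, hs, hb⟩

theorem not_bad_1 (g : G) (hA : g 0 false = some (1, true, true)) (t : ℕ) (ht : t < 95) :
    ¬ BadAt g 0 t := by
  intro h
  have hle := h.le
  cases hB : g 1 false with
  | none =>
    obtain ⟨t, rfl⟩ : ∃ k, t = k + 2 := ⟨t - 2, by omega⟩
    obtain ⟨q, T, hs, -⟩ := h.step hA
    have : mv blank true true 0 = false := by simp [mv, blank]
    simp only [gsteps, this, hB] at hs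
    simp at hs
  | some v =>
    obtain ⟨bq, bw, bd⟩ := v
    by_cases hb : (bd = false ∧ bq ≠ 3) ∨ (bd = true ∧ bq = 2)
    · obtain ⟨q, T, hs, hbad⟩ := h
      exact batch' g bq bw bd hA hB hb t ht q T hs hbad
    · by_cases h3 : bq = 3
      · subst h3
        obtain ⟨q, T, hs, hbad⟩ := h.conj (Equiv.swap 2 3) false
        refine batch' (BB4.conj (Equiv.swap 2 3) false g) 2 bw bd ?_ ?_ ?_ t ht q T hs hbad
        · have : (Equiv.swap (2 : Fin 4) 3) 0 = 0 := by decide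
          simp only [BB4.conj, Equiv.symm_swap, this, hA]
          decide
        · have : (Equiv.swap (2 : Fin 4) 3) 1 = 1 := by decide
          simp only [BB4.conj, Equiv.symm_swap, this, hB]
          have : (Equiv.swap (2 : Fin 4) 3) 3 = 2 := by decide
          simp [this]
        · cases bd <;> simp
      · have hd : bd = true := by
          cases bd
          · simp [h3] at hb
          · rfl
        subst hd
        have h01 : bq = 0 ∨ bq = 1 := by
          have : bq ≠ 2 := by simpa using hb
          clear * - this h3
          revert bq
          decide
        refine not_bad_of_nonhalt g (fun q => q = 0 ∨ q = 1) true 0 (Or.inl rfl) ?_ t h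
        rintro q (rfl | rfl)
        · exact ⟨_, _, hA, Or.inr rfl⟩
        · exact ⟨_, _, hB, h01⟩

theorem exists_perm : ∀ q0 q1 : Fin 4, q1 ≠ q0 →
    ∃ σ : Equiv.Perm (Fin 4), σ q0 = 0 ∧ σ q1 = 1 := by
  intro q0 q1 h
  refine ⟨(Equiv.swap q0 0).trans (Equiv.swap (Equiv.swap q0 0 q1) 1), ?_⟩
  revert q0 q1
  decide

theorem not_bad (t : ℕ) : t < 95 → ∀ (g : G) (q0 : Fin 4), ¬ BadAt g q0 t := by
  induction t with
  | zero =>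
    intro _ g q0 h
    have := h.le
    omega
  | succ t ih =>
    intro ht g q0 h
    cases hA : g q0 false with
    | none =>
      obtain ⟨q, T, hs, -⟩ := h
      have : (blank 0) = false := rfl
      simp only [gsteps, this, hA] at hs
      simp at hs
    | some v =>
      obtain ⟨q1, w, d⟩ := v
      by_cases hq : q1 = q0
      · subst hq
        refine not_bad_of_nonhalt g (fun q => q = q1) d q1 rfl ?_ _ h
        rintro q rfl
        exact ⟨_, _, hA, rfl⟩
      · cases w
        · obtain ⟨q, T, hs, hb⟩ := h.step hA
          refine ih (by omega) g q1 ⟨q, T, ?_, hb⟩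
          have : mv blank false d = blank := by
            funext i
            simp only [mv, blank, Function.update_apply]
            split <;> rfl
          rwa [this] at hs
        · obtain ⟨σ, hσ0, hσ1⟩ : ∃ σ : Equiv.Perm (Fin 4), σ q0 = 0 ∧ σ q1 = 1 := by
            exact exists_perm q0 q1 hq
          have h' := h.conj σ (!d)
          rw [hσ0] at h'
          refine not_bad_1 _ ?_ _ ht h'
          have : σ.symm 0 = q0 := by rw [← hσ0]; simp
          simp [BB4.conj, this, hA, hσ1]

/-- Machines in the sense of the statement. -/
abbrev TM := Fin 4 × Bool → Option (Fin 4 × Bool × Dir)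

/-- Follow at most `k` moves of `f` on one cell, until the head moves away. -/
def chase (f : TM) : ℕ → Fin 4 → Bool → Option (Fin 4 × Bool × Bool)
  | 0, _, _ => none
  | k + 1, q, s =>
    match f (q, s) with
    | none => none
    | some (p, w, .left) => some (p, w, false)
    | some (p, w, .right) => some (p, w, true)
    | some (p, w, .stay) => chase f k p w

/-- The tape relative to the head. -/
def relT (c : Cfg (Fin 4)) : ℤ → Bool := fun i => c.tape (i + c.head)

theorem relT_zero (c : Cfg (Fin 4)) : relT c 0 = c.tape c.head := by simp [relT]

theorem relT_update (q : Fin 4) (h : ℤ) (T : ℤ → Bool) (w : Bool) (a i : ℤ) :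
    relT ⟨q, h + a, Function.update T h w⟩ i =
      Function.update (fun i => T (i + h)) 0 w (i + a) := by
  by_cases e : i + a = 0
  · have : i + (h + a) = h := by omega
    simp [relT, this, e]
  · simp only [relT]
    rw [Function.update_of_ne (by omega), Function.update_of_ne e]
    congr 1
    ring

theorem inner (f : TM) (k : ℕ) : ∀ (t : ℕ) (c c' : Cfg (Fin 4)), t < k →
    stepsTM f t c = some c' → Halted f c' →
    (∃ q w d t1 c1, chase f k c.state (relT c 0) = some (q, w, d) ∧ t1 < t ∧
      stepsTM f t1 c1 = some c' ∧ c1.state = q ∧ relT c1 = mv (relT c) w d) ∨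
    (chase f k c.state (relT c 0) = none ∧ ∃ w, relT c' = Function.update (relT c) 0 w) := by
  induction k with
  | zero => intro t c c' h; omega
  | succ k ih =>
    intro t c c' ht hs hh
    cases t with
    | zero =>
      simp only [stepsTM, Option.some.injEq] at hs
      subst hs
      refine Or.inr ⟨?_, relT c 0, by simp⟩
      rw [relT_zero]
      unfold Halted at hh
      simp [chase, hh]
    | succ t =>
      simp only [stepsTM, stepTM] at hs
      cases hv : f (c.state, c.tape c.head) with
      | none => simp [hv] at hs
      | some v =>
        obtain ⟨q, w, D⟩ := v
        rw [hv] at hs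
        simp only [Option.map_some, Option.bind_some] at hs
        cases D with
        | left =>
          refine Or.inl ⟨q, w, false, t, _, ?_, by omega, hs, rfl, ?_⟩
          · simp [relT_zero, chase, hv]
          · funext i
            exact relT_update q c.head c.tape w (-1) i
        | right =>
          refine Or.inl ⟨q, w, true, t, _, ?_, by omega, hs, rfl, ?_⟩
          · simp [relT_zero, chase, hv]
          · funext i
            exact relT_update q c.head c.tape w 1 i
        | stay =>
          have e : relT ⟨q, c.head + Dir.stay.move, Function.update c.tape c.head w⟩ =
              Function.update (relT c) 0 w := by
            funext i
            have := relT_update q c.head c.tape w 0 i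
            rw [add_zero i] at this
            exact this
          have ec : chase f (k + 1) c.state (relT c 0) = chase f k q w := by
            simp [relT_zero, chase, hv]
          rw [ec]
          have := ih t _ c' (by omega) hs hh
          rw [e] at this
          simp only [Function.update_self] at this
          rcases this with ⟨q1, w1, d1, t1, c1, h1, h2, h3, h4, h5⟩ | ⟨h1, w1, h2⟩
          · refine Or.inl ⟨q1, w1, d1, t1, c1, h1, by omega, h3, h4, ?_⟩
            rw [h5]
            funext i
            simp [mv]
          · refine Or.inr ⟨h1, w1, ?_⟩
            rw [h2]
            simp

theorem outer (f : TM) (t : ℕ) : ∀ (c c' : Cfg (Fin 4)), t < 95 →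
    stepsTM f t c = some c' → Halted f c' →
    ∃ t' ≤ t, ∃ q T w, gsteps (chase f 95) t' (c.state, relT c) = some (q, T) ∧
      chase f 95 q (T 0) = none ∧ relT c' = Function.update T 0 w := by
  induction t using Nat.strong_induction_on with
  | _ t ih =>
    intro c c' ht hs hh
    rcases inner f 95 t c c' ht hs hh with ⟨q, w, d, t1, c1, h1, h2, h3, h4, h5⟩ | ⟨h1, w, h2⟩
    · obtain ⟨t', ht', p, T, w', e1, e2, e3⟩ := ih t1 h2 c1 c' (by omega) h3 hh
      refine ⟨t' + 1, by omega, p, T, w', ?_, e2, e3⟩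
      simp only [gsteps, h1, Option.bind_some]
      rw [h4, h5] at e1
      exact e1
    · exact ⟨0, by omega, c.state, relT c, w, rfl, h1, h2⟩

theorem no_twelve (f : TM) (t : ℕ) (ht : t < 95) (c : Cfg (Fin 4))
    (hs : stepsTM f t (initCfg 0) = some c) (hh : Halted f c) : ¬ Ones c.tape 12 := by
  intro h12
  obtain ⟨t', ht', q, T, w, e1, e2, e3⟩ := outer f t _ c ht hs hh
  refine not_bad t' (by omega) (chase f 95) 0 ⟨q, T, e1, e2, ?_⟩
  have h1 : Ones (relT c) 12 := h12.shift c.head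
  have hw : c.tape c.head = w := by rw [← relT_zero, e3]; simp
  rw [e3] at h1
  obtain ⟨m, hm, hc⟩ := h1.update (T 0)
  simp only [Function.update_idem, Function.update_eq_self, Function.update_self] at hm hc
  refine ⟨m, hm, ?_⟩
  by_cases hp : (c.state, w) = (q, T 0)
  · left
    rw [Prod.mk.injEq] at hp
    rw [hp.2] at hc
    omega
  · right
    refine ⟨?_, c.state, w, hp, ?_⟩
    · have h1 := Bool.toNat_le w
      have h2 := Bool.toNat_le (T 0)
      omega
    · unfold Halted at hh
      rw [hw] at hh
      simp [chase, hh]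

theorem ones_of_list (w : List Bool) : ∀ (T : ℤ → Bool) (i : ℤ),
    (∀ k : ℕ, k < w.length → w.getD k false = T (i + k)) →
    (∀ j : ℤ, T j = true → i ≤ j ∧ j < i + w.length) → Ones T (w.count true) := by
  induction w with
  | nil =>
    intro T i _ h
    refine ⟨∅, fun z => ?_, rfl⟩
    have := h z
    simp only [List.length_nil, Nat.cast_zero, add_zero] at this
    simp only [Finset.notMem_empty, iff_false]
    intro hz
    have := this hz
    omega
  | cons b w ih =>
    intro T i h1 h2
    have hb : b = T i := by simpa using h1 0 (by simp)
    obtain ⟨S, hS, hc⟩ := ih (Function.update T i false) (i + 1) (fun k hk => by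
        rw [Function.update_of_ne (by omega)]
        have := h1 (k + 1) (by simpa using hk)
        simp only [List.getD_cons_succ] at this
        rw [this]
        congr 1; push_cast; ring) (fun j hj => by
        by_cases e : j = i
        · simp [e] at hj
        · rw [Function.update_of_ne e] at hj
          have := h2 j hj
          simp only [List.length_cons] at this
          push_cast at this
          omega)
    have hi : i ∉ S := by
      rw [← hS]; simp
    cases b
    · refine ⟨S, fun z => ?_, by simpa using hc⟩
      rw [← hS]
      by_cases e : z = i
      · simp [e, ← hb]
      · rw [Function.update_of_ne e]
    · refine ⟨insert i S, fun z => ?_, by simp [Finset.card_insert_of_notMem hi, hc]⟩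
      rw [Finset.mem_insert, ← hS]
      by_cases e : z = i
      · simp [e, ← hb]
      · simp [e]

/-- A machine that needs 95 steps to write 12 ones. -/
def wit : TM
  | (0, false) => some (1, true, .right)
  | (0, true) => some (2, false, .right)
  | (1, false) => some (0, true, .left)
  | (1, true) => some (0, true, .right)
  | (2, false) => none
  | (2, true) => some (3, true, .right)
  | (3, false) => some (3, true, .left)
  | (3, true) => some (1, false, .left)

theorem far (f : TM) (t : ℕ) : ∀ (c c' : Cfg (Fin 4)) (n : ℕ),
    (|c.head| ≤ n ∧ ∀ j : ℤ, (n : ℤ) < |j| → c.tape j = false) →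
    stepsTM f t c = some c' → ∀ j : ℤ, ((n + t : ℕ) : ℤ) < |j| → c'.tape j = false := by
  induction t with
  | zero =>
    intro c c' n h hs j hj
    simp only [stepsTM, Option.some.injEq] at hs
    subst hs
    exact h.2 j hj
  | succ t ih =>
    intro c c' n h hs j hj
    simp only [stepsTM, stepTM] at hs
    cases hv : f (c.state, c.tape c.head) with
    | none => simp [hv] at hs
    | some v =>
      rw [hv] at hs
      simp only [Option.map_some, Option.bind_some] at hs
      refine ih _ c' (n + 1) ⟨?_, fun i hi => ?_⟩ hs j (by push_cast at hj ⊢; omega)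
      · have h1 : |v.2.2.move| ≤ 1 := by cases v.2.2 <;> simp [Dir.move]
        have h2 := abs_add_le c.head v.2.2.move
        push_cast
        linarith [h.1]
      · show Function.update c.tape c.head v.2.1 i = false
        have hne : i ≠ c.head := by
          rintro rfl
          have := h.1
          push_cast at hi
          omega
        rw [Function.update_of_ne hne]
        exact h.2 i (by push_cast at hi; omega)

theorem wit_some : (stepsTM wit 95 (initCfg 0)).isSome = true := by decide +kernel

theorem wit_halted : ((stepsTM wit 95 (initCfg 0)).map fun c =>
    (wit (c.state, c.tape c.head)).isNone) = some true := by decide +kernel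

theorem wit_tape : ((stepsTM wit 95 (initCfg 0)).map fun c =>
    (List.range 191).map fun k => c.tape ((k : ℤ) - 95)) =
    some ((List.range 191).map fun k => Nat.ble 93 k && Nat.ble k 104) := by decide +kernel

theorem wit_computes : Computes wit 0 (List.replicate 12 true) 95 := by
  obtain ⟨c, hc⟩ := Option.isSome_iff_exists.1 wit_some
  have h1 := wit_halted
  have h2 := wit_tape
  rw [hc] at h1 h2
  simp only [Option.map_some, Option.some.injEq] at h1 h2
  have hfar := far wit 95 (initCfg 0) c 0 (by simp [initCfg]) hc
  have hin : ∀ k : ℕ, k < 191 → c.tape ((k : ℤ) - 95) = (Nat.ble 93 k && Nat.ble k 104) := by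
    intro k hk
    exact List.map_inj_left.1 h2 k (by simpa using hk)
  have hT : ∀ j : ℤ, c.tape j = true ↔ -2 ≤ j ∧ j < 10 := by
    intro j
    by_cases hj : (95 : ℤ) < |j|
    · rw [hfar j (by push_cast; omega)]
      simp only [Bool.false_eq_true, false_iff]
      intro h
      have : |j| ≤ 95 := abs_le.2 ⟨by omega, by omega⟩
      omega
    · have := abs_le.1 (not_lt.1 hj)
      obtain ⟨k, hk⟩ : ∃ k : ℕ, j = (k : ℤ) - 95 := ⟨(j + 95).toNat, by omega⟩
      subst hk
      rw [hin k (by omega), Bool.and_eq_true, Nat.ble_eq, Nat.ble_eq]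
      omega
  refine ⟨c, hc, ?_, -2, ?_, ?_, ?_⟩
  · unfold Halted
    simpa using h1
  · intro k hk
    simp only [List.length_replicate] at hk
    rw [(hT _).2 (by omega)]
    clear * - hk
    interval_cases k <;> rfl
  · intro j hj
    have := (hT j).1 hj
    simp only [List.length_replicate]
    push_cast
    omega
  · intro _
    decide

end BB4

/-- K_TBB(4) = 95: among all Turing machines with at most 4
states that halt on the all-zero tape with a computed word containing exactly
BB(4) = 12 ones, the minimum number of steps taken before halting is
exactly 95. -/
theorem min_running_time_busy_beaver_4 :
    IsLeast
      {t : ℕ |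
        ∃ (f : Fin 4 × Bool → Option (Fin 4 × Bool × Dir)) (w : List Bool),
          Computes f 0 w t ∧ w.count true = 12} 95 := by
  refine ⟨⟨BB4.wit, List.replicate 12 true, BB4.wit_computes, by decide⟩, ?_⟩
  rintro t ⟨f, w, ⟨c, hs, hh, i, h1, h2, -⟩, hw⟩
  by_contra ht
  refine BB4.no_twelve f t (not_le.1 ht) c hs hh ?_
  rw [← hw]
  exact BB4.ones_of_list w c.tape i h1 h2
end

section
/- K_TBB(3) = 10: among all Turing machines with at most 3 states that halt on the all-zero tape with a computed word containing exactly BB(3) = 6 ones, the minimum number of steps taken before halting is exactly 10. -/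
/-! ### A lazily branching search over partial machines -/

namespace Search

/-- The three states, as an enumeration that is cheap to match on. -/
inductive St : Type
  | a | b | c

def St.fin : St → Fin 3
  | .a => 0
  | .b => 1
  | .c => 2

theorem St.exists_fin (q : Fin 3) : ∃ s : St, s.fin = q := by
  fin_cases q
  · exact ⟨.a, rfl⟩
  · exact ⟨.b, rfl⟩
  · exact ⟨.c, rfl⟩

/-- A transition. -/
inductive Tr : Type
  | mk (q : St) (b : Bool) (d : Dir)

def Tr.val : Tr → Fin 3 × Bool × Dir
  | .mk q b d => (q.fin, b, d)

/-- The part of the transition table that has been fixed so far. -/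
inductive Tab : Type
  | mk (a0 a1 b0 b1 c0 c1 : Option Tr)

def Tab.get : Tab → St → Bool → Option Tr
  | .mk a0 a1 b0 b1 c0 c1, q, s =>
    match q, s with
    | .a, false => a0
    | .a, true => a1
    | .b, false => b0
    | .b, true => b1
    | .c, false => c0
    | .c, true => c1

/-- Set an entry and pass the new table on. -/
def Tab.set : Tab → St → Bool → Tr → (Tab → Bool) → Bool
  | .mk a0 a1 b0 b1 c0 c1, q, s, x, k =>
    match q, s with
    | .a, false => k (.mk (some x) a1 b0 b1 c0 c1)
    | .a, true => k (.mk a0 (some x) b0 b1 c0 c1)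
    | .b, false => k (.mk a0 a1 (some x) b1 c0 c1)
    | .b, true => k (.mk a0 a1 b0 (some x) c0 c1)
    | .c, false => k (.mk a0 a1 b0 b1 (some x) c1)
    | .c, true => k (.mk a0 a1 b0 b1 c0 (some x))

/-- All six entries are fixed, so the machine never halts. -/
def Tab.full : Tab → Bool
  | .mk (some _) (some _) (some _) (some _) (some _) (some _) => true
  | _ => false

theorem Tab.full_get (p : Tab) (h : p.full = true) (q : St) (s : Bool) :
    ∃ x, p.get q s = some x := by
  rcases p with ⟨_ | _, _ | _, _ | _, _ | _, _ | _, _ | _⟩ <;>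
    first
    | (cases q <;> cases s <;> exact ⟨_, rfl⟩)
    | (exact absurd h (by simp [Tab.full]))

/-- The table `p` is a part of the transition function `f`. -/
def Agree (p : Tab) (f : Fin 3 × Bool → Option (Fin 3 × Bool × Dir)) : Prop :=
  ∀ q s x, p.get q s = some x → f (q.fin, s) = some x.val

theorem Tab.set_spec (p : Tab) (f : Fin 3 × Bool → Option (Fin 3 × Bool × Dir))
    (hp : Agree p f) (q : St) (s : Bool) (x : Tr) (hx : f (q.fin, s) = some x.val)
    (k : Tab → Bool) (hk : p.set q s x k = true) :
    ∃ p', Agree p' f ∧ k p' = true := by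
  rcases p with ⟨a0, a1, b0, b1, c0, c1⟩
  cases q <;> cases s <;> refine ⟨_, ?_, hk⟩ <;> intro q' s' y hy <;>
    cases q' <;> cases s' <;>
    first
    | (exact hp _ _ _ hy)
    | (cases hy; exact hx)

/-- Every state. -/
def allSt (k : St → Bool) : Bool := k .a && (k .b && k .c)

def allDir (k : Dir → Bool) : Bool := k .left && (k .stay && k .right)

def allBool (k : Bool → Bool) : Bool := k true && k false

theorem allSt_spec {k : St → Bool} (h : allSt k = true) (q : St) : k q = true := by
  simp only [allSt, Bool.and_eq_true] at h
  cases q <;> simp [h]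

theorem allDir_spec {k : Dir → Bool} (h : allDir k = true) (q : Dir) : k q = true := by
  simp only [allDir, Bool.and_eq_true] at h
  cases q <;> simp [h]

theorem allBool_spec {k : Bool → Bool} (h : allBool k = true) (q : Bool) : k q = true := by
  simp only [allBool, Bool.and_eq_true] at h
  cases q <;> simp [h]

/-- Replacing `s` by `b` uses up some of the slack `w`. -/
def spend (s b : Bool) (w : ℕ) (k : ℕ → Bool) : Bool :=
  match s, b with
  | false, true => k w
  | false, false => match w with
    | 0 => true
    | w + 1 => k w
  | true, true => match w with
    | 0 => true
    | w + 1 => k w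
  | true, false => match w with
    | 0 => true
    | 1 => true
    | w + 2 => k w

/-- Move the head on a zipper. -/
def shift (d : Dir) (L : List Bool) (b : Bool) (R : List Bool)
    (k : List Bool → Bool → List Bool → Bool) : Bool :=
  match d with
  | .stay => k L b R
  | .left => match L with
    | [] => k [] false (b :: R)
    | x :: L => k L x (b :: R)
  | .right => match R with
    | [] => k (b :: L) false []
    | x :: R => k (b :: L) x R

/-- `true` if no completion of the table reaches, in exactly `n` more steps, a halting
configuration with six ones; the slack `w` is (number of ones) `+ n - 6`. -/
def search : ℕ → Tab → ℕ → St → List Bool → Bool → List Bool → Bool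
  | 0, p, w, q, _, s, _ => match w with
    | 0 => (p.get q s).isSome
    | _ + 1 => true
  | n + 1, p, w, q, L, s, R =>
    match p.get q s with
    | some (.mk q₁ b d) =>
      spend s b w fun w₁ => shift d L b R fun L₁ s₁ R₁ => search n p w₁ q₁ L₁ s₁ R₁
    | none =>
      allBool fun b => spend s b w fun w₁ =>
      allDir fun d => shift d L b R fun L₁ s₁ R₁ =>
      allSt fun q₁ => p.set q s (.mk q₁ b d) fun p₁ =>
        p₁.full || search n p₁ w₁ q₁ L₁ s₁ R₁

/-- The zipper `L, s, R` describes the tape around position `h`. -/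
def Rep (tape : ℤ → Bool) (h : ℤ) (L : List Bool) (s : Bool) (R : List Bool) : Prop :=
  tape h = s ∧ (∀ k : ℕ, tape (h - 1 - k) = L.getD k false) ∧
    (∀ k : ℕ, tape (h + 1 + k) = R.getD k false)

/-- The tape has exactly `m` ones. -/
def Ones (tape : ℤ → Bool) (m : ℕ) : Prop :=
  ∃ S : Finset ℤ, (∀ j, tape j = true ↔ j ∈ S) ∧ S.card = m

theorem spend_spec {tape : ℤ → Bool} {h : ℤ} {s : Bool} (hs : tape h = s) (b : Bool)
    {w m n : ℕ} (hm : Ones tape m) (hw : m + (n + 1) = 6 + w) {k : ℕ → Bool}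
    (hk : spend s b w k = true) (hb : ∀ m', Ones (Function.update tape h b) m' → 6 ≤ m' + n) :
    ∃ m' w', Ones (Function.update tape h b) m' ∧ m' + n = 6 + w' ∧ k w' = true := by
  obtain ⟨S, hS, rfl⟩ := hm
  cases s <;> cases b
  · have h1 : Ones (Function.update tape h false) S.card := by
      refine ⟨S, fun j => ?_, rfl⟩
      rw [← hs, Function.update_eq_self]; exact hS j
    have := hb _ h1
    rcases w with _ | w
    · omega
    · exact ⟨_, w, h1, by omega, hk⟩
  · have hn : h ∉ S := by rw [← hS, hs]; simp
    have h1 : Ones (Function.update tape h true) (S.card + 1) := by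
      refine ⟨insert h S, fun j => ?_, Finset.card_insert_of_notMem hn⟩
      by_cases hj : j = h
      · subst hj; simp
      · simp [hj, hS]
    exact ⟨_, w, h1, by omega, hk⟩
  · have hn : h ∈ S := by rw [← hS, hs]
    have hc := Finset.card_erase_add_one hn
    have h1 : Ones (Function.update tape h false) (S.erase h).card := by
      refine ⟨S.erase h, fun j => ?_, rfl⟩
      by_cases hj : j = h
      · subst hj; simp
      · simp [hj, hS]
    have := hb _ h1
    rcases w with _ | _ | w
    · omega
    · omega
    · exact ⟨_, w, h1, by omega, hk⟩
  · have h1 : Ones (Function.update tape h true) S.card := by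
      refine ⟨S, fun j => ?_, rfl⟩
      rw [show Function.update tape h true = tape by rw [← hs, Function.update_eq_self]]
      exact hS j
    have := hb _ h1
    rcases w with _ | w
    · omega
    · exact ⟨_, w, h1, by omega, hk⟩

theorem shift_spec {tape : ℤ → Bool} {h : ℤ} {L R : List Bool} {s : Bool}
    (hr : Rep tape h L s R) (b : Bool) (d : Dir) {k : List Bool → Bool → List Bool → Bool}
    (hk : shift d L b R k = true) :
    ∃ L' s' R', Rep (Function.update tape h b) (h + d.move) L' s' R' ∧ k L' s' R' = true := by
  obtain ⟨-, hL, hR⟩ := hr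
  have hu : ∀ j, j ≠ h → Function.update tape h b j = tape j := fun j hj =>
    Function.update_of_ne hj _ _
  have hLu : ∀ k : ℕ, Function.update tape h b (h - 1 - k) = L.getD k false := fun k => by
    rw [hu _ (by omega), hL]
  have hRu : ∀ k : ℕ, Function.update tape h b (h + 1 + k) = R.getD k false := fun k => by
    rw [hu _ (by omega), hR]
  have hh : Function.update tape h b h = b := Function.update_self ..
  generalize Function.update tape h b = T at *
  cases d
  · have key : Rep T (h + Dir.left.move) L.tail (L.getD 0 false) (b :: R) := by
      refine ⟨?_, fun k => ?_, fun k => ?_⟩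
      · rw [← hLu 0]; congr 1; simp [Dir.move]; ring
      · have := hLu (k + 1)
        rw [show h + Dir.left.move - 1 - (k : ℤ) = h - 1 - ((k + 1 : ℕ) : ℤ) by
          simp only [Dir.move]; push_cast; ring, this]
        cases L <;> simp
      · cases k with
        | zero => rw [show h + Dir.left.move + 1 + ((0 : ℕ) : ℤ) = h by simp [Dir.move], hh]; rfl
        | succ k =>
          rw [show h + Dir.left.move + 1 + ((k + 1 : ℕ) : ℤ) = h + 1 + k by
            simp only [Dir.move]; push_cast; ring, hRu]
          simp
    cases L <;> exact ⟨_, _, _, key, hk⟩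
  · refine ⟨L, b, R, ?_, hk⟩
    simpa [Rep, Dir.move] using ⟨hh, hLu, hRu⟩
  · have key : Rep T (h + Dir.right.move) (b :: L) (R.getD 0 false) R.tail := by
      refine ⟨?_, fun k => ?_, fun k => ?_⟩
      · rw [← hRu 0]; congr 1; simp [Dir.move]
      · cases k with
        | zero => rw [show h + Dir.right.move - 1 - ((0 : ℕ) : ℤ) = h by simp [Dir.move], hh]; rfl
        | succ k =>
          rw [show h + Dir.right.move - 1 - ((k + 1 : ℕ) : ℤ) = h - 1 - k by
            simp only [Dir.move]; push_cast; ring, hLu]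
          simp
      · have := hRu (k + 1)
        rw [show h + Dir.right.move + 1 + (k : ℤ) = h + 1 + ((k + 1 : ℕ) : ℤ) by
          simp only [Dir.move]; push_cast; ring, this]
        cases R <;> simp
    cases R <;> exact ⟨_, _, _, key, hk⟩

theorem Ones.unique {tape : ℤ → Bool} {m m' : ℕ} (h : Ones tape m) (h' : Ones tape m') :
    m = m' := by
  obtain ⟨S, hS, rfl⟩ := h
  obtain ⟨S', hS', rfl⟩ := h'
  congr 1; ext j; rw [← hS, ← hS']

theorem Ones.update_le {tape : ℤ → Bool} {m m' : ℕ} {h : ℤ} {b : Bool} (hm : Ones tape m)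
    (hm' : Ones (Function.update tape h b) m') : m' ≤ m + 1 := by
  obtain ⟨S, hS, rfl⟩ := hm
  obtain ⟨S', hS', rfl⟩ := hm'
  refine (Finset.card_le_card (t := insert h S) fun j hj => ?_).trans (Finset.card_insert_le _ _)
  rw [← hS'] at hj
  by_cases h1 : j = h
  · simp [h1]
  · rw [Function.update_of_ne h1, hS] at hj; simp [hj]

theorem Ones.exists_update {tape : ℤ → Bool} {m : ℕ} (h : ℤ) (b : Bool) (hm : Ones tape m) :
    ∃ m', Ones (Function.update tape h b) m' := by
  obtain ⟨S, hS, rfl⟩ := hm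
  cases b
  · refine ⟨_, S.erase h, fun j => ?_, rfl⟩
    by_cases hj : j = h
    · subst hj; simp
    · simp [hj, hS]
  · refine ⟨_, insert h S, fun j => ?_, rfl⟩
    by_cases hj : j = h
    · subst hj; simp
    · simp [hj, hS]

/-- Each step adds at most one symbol `1`. -/
theorem ones_le {Q : Type} (f : Q × Bool → Option (Q × Bool × Dir)) (n : ℕ) :
    ∀ (c c' : Cfg Q) (m m' : ℕ), stepsTM f n c = some c' → Ones c.tape m → Ones c'.tape m' →
      m' ≤ m + n := by
  induction n with
  | zero =>
    intro c c' m m' h hm hm'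
    cases h
    exact (hm'.unique hm).le
  | succ n ih =>
    intro c c' m m' h hm hm'
    simp only [stepsTM, Option.bind_eq_some_iff, stepTM, Option.map_eq_some_iff] at h
    obtain ⟨c1, ⟨x, -, rfl⟩, h⟩ := h
    obtain ⟨m1, h1⟩ := hm.exists_update c.head x.2.1
    have := hm.update_le h1
    have := ih _ _ m1 m' h h1 hm'
    omega

theorem search_sound (f : Fin 3 × Bool → Option (Fin 3 × Bool × Dir)) (n : ℕ) :
    ∀ (p : Tab) (w : ℕ) (q : St) (L : List Bool) (s : Bool) (R : List Bool) (c : Cfg (Fin 3))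
      (m : ℕ), Agree p f → c.state = q.fin → Rep c.tape c.head L s R → Ones c.tape m →
      m + n = 6 + w → search n p w q L s R = true →
      ∀ c', stepsTM f n c = some c' → Halted f c' → ¬ Ones c'.tape 6 := by
  induction n with
  | zero =>
    intro p w q L s R c m hp hq hr hm hw hs c' hc hh h6
    cases hc
    have := hm.unique h6
    obtain rfl : w = 0 := by omega
    simp only [search, Option.isSome_iff_exists] at hs
    obtain ⟨x, hx⟩ := hs
    have := hp _ _ _ hx
    rw [Halted, hq, hr.1, this] at hh
    cases hh
  | succ n ih =>
    intro p w q L s R c m hp hq hr hm hw hs c' hc hh h6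
    simp only [stepsTM, Option.bind_eq_some_iff, stepTM, Option.map_eq_some_iff] at hc
    obtain ⟨c1, ⟨⟨q1, b, d⟩, hx, rfl⟩, hc⟩ := hc
    rw [hq, hr.1] at hx
    obtain ⟨q', rfl⟩ := St.exists_fin q1
    have hb : ∀ m', Ones (Function.update c.tape c.head b) m' → 6 ≤ m' + n := fun m' h =>
      ones_le f n _ _ m' 6 hc h h6
    rw [search] at hs
    split at hs
    · rename_i q2 b2 d2 hg
      have he := hp _ _ _ hg
      rw [hx] at he
      simp only [Tr.val, Option.some.injEq, Prod.mk.injEq] at he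
      obtain ⟨he, rfl, rfl⟩ := he
      obtain ⟨m', w', hm', hw', hs⟩ := spend_spec hr.1 b hm hw hs hb
      obtain ⟨L', s', R', hr', hs⟩ := shift_spec hr b d hs
      exact ih _ _ _ _ _ _ _ m' hp he hr' hm' hw' hs c' hc hh h6
    · obtain ⟨m', w', hm', hw', hs⟩ := spend_spec hr.1 b hm hw (allBool_spec hs b) hb
      obtain ⟨L', s', R', hr', hs⟩ := shift_spec hr b d (allDir_spec hs d)
      obtain ⟨p', hp', hs⟩ := Tab.set_spec p f hp q s (.mk q' b d) hx _ (allSt_spec hs q')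
      rw [Bool.or_eq_true] at hs
      rcases hs with hs | hs
      · obtain ⟨q3, h3⟩ := St.exists_fin c'.state
        obtain ⟨x, hx⟩ := p'.full_get hs q3 (c'.tape c'.head)
        have := hp' _ _ _ hx
        rw [Halted, ← h3, this] at hh
        cases hh
      · exact ih _ _ _ _ _ _ _ m' hp' rfl hr' hm' hw' hs c' hc hh h6

def Tab.empty : Tab := .mk none none none none none none

theorem agree_empty (f : Fin 3 × Bool → Option (Fin 3 × Bool × Dir)) : Agree .empty f := by
  intro q s x h
  cases q <;> cases s <;> cases h

theorem search_6 : search 6 .empty 0 .a [] false [] = true := by decide +kernel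
theorem search_7 : search 7 .empty 1 .a [] false [] = true := by decide +kernel
theorem search_8 : search 8 .empty 2 .a [] false [] = true := by decide +kernel
theorem search_9 : search 9 .empty 3 .a [] false [] = true := by decide +kernel

theorem ones_zero : Ones (fun _ => false) 0 := ⟨∅, by simp, rfl⟩

theorem count_eq_card (w : List Bool) :
    w.count true = ((Finset.range w.length).filter fun k => w.getD k false = true).card := by
  induction w with
  | nil => rfl
  | cons x w ih =>
    rw [List.length_cons, Finset.card_filter, Finset.sum_range_succ', ← Finset.card_filter]
    simp only [List.getD_cons_succ, List.getD_cons_zero]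
    rw [← ih, List.count_cons]
    simp

theorem ones_of_word {tape : ℤ → Bool} {w : List Bool} (h : TapeWord tape w) :
    Ones tape (w.count true) := by
  obtain ⟨i, h1, h2, -⟩ := h
  refine ⟨((Finset.range w.length).filter fun k => w.getD k false = true).map
    ⟨fun k : ℕ => i + (k : ℤ), fun a b hab => by
      have : i + (a : ℤ) = i + (b : ℤ) := hab
      omega⟩, fun j => ?_, ?_⟩
  · simp only [Finset.mem_map, Finset.mem_filter, Finset.mem_range]
    constructor
    · intro hj
      have := h2 j hj
      have e : i + ((j - i).toNat : ℤ) = j := by omega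
      have hl : (j - i).toNat < w.length := by omega
      exact ⟨(j - i).toNat, ⟨hl, by rw [h1 _ hl, e, hj]⟩, e⟩
    · rintro ⟨k, ⟨hk, hk'⟩, rfl⟩
      exact (h1 k hk).symm.trans hk'
  · rw [Finset.card_map, count_eq_card]

theorem lower (t : ℕ) (f : Fin 3 × Bool → Option (Fin 3 × Bool × Dir)) (w : List Bool)
    (h : Computes f 0 w t) (hw : w.count true = 6) : 10 ≤ t := by
  obtain ⟨c, hc, hh, hword⟩ := h
  have h6 := ones_of_word hword
  rw [hw] at h6
  have h0 : Ones (initCfg (0 : Fin 3)).tape 0 := ones_zero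
  have ht := ones_le f t _ _ _ _ hc h0 h6
  by_contra hlt
  have hr : Rep (initCfg (0 : Fin 3)).tape (initCfg (0 : Fin 3)).head [] false [] := by
    simp [Rep, initCfg]
  have key := fun k hk hs => search_sound f t .empty k .a [] false [] (initCfg 0) 0
    (agree_empty f) rfl hr h0 hk hs c hc hh h6
  obtain rfl | rfl | rfl | rfl : t = 6 ∨ t = 7 ∨ t = 8 ∨ t = 9 := by omega
  · exact key 0 rfl search_6
  · exact key 1 rfl search_7
  · exact key 2 rfl search_8
  · exact key 3 rfl search_9

/-- A machine with six ones after ten steps. -/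
def champion : Fin 3 × Bool → Option (Fin 3 × Bool × Dir)
  | (0, false) => some (1, true, .left)
  | (1, false) => some (2, true, .left)
  | (2, false) => some (0, true, .right)
  | (0, true) => some (2, true, .right)
  | (2, true) => some (1, false, .right)
  | (1, true) => none

/-- The final tape of the champion, as the sequence of its writes. -/
def finalTape : ℤ → Bool :=
  (Function.update
    (Function.update
    (Function.update
    (Function.update
    (Function.update
    (Function.update
    (Function.update
    (Function.update
    (Function.update
    (Function.update (fun _ => false) (0) true) (-1) true) (-2) true) (-1) true) (0) false) (1) true) (0) true) (1) true) (2) true) (3) true)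

end Search

/-- K_TBB(3) = 10: among all Turing machines with at most 3
states that halt on the all-zero tape with a computed word containing exactly
BB(3) = 6 ones, the minimum number of steps taken before halting is
exactly 10. -/
theorem min_running_time_busy_beaver_3 :
    IsLeast
      {t : ℕ |
        ∃ (f : Fin 3 × Bool → Option (Fin 3 × Bool × Dir)) (w : List Bool),
          Computes f 0 w t ∧ w.count true = 6} 10 := by
  
  refine ⟨?_, ?_⟩
  · refine ⟨Search.champion, List.replicate 6 true, ⟨⟨1, 2, Search.finalTape⟩, rfl, rfl, -2,
      ?_, ?_, ?_⟩, rfl⟩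
    · intro k hk
      have hk : k < 6 := hk
      interval_cases k <;> rfl
    · intro j hj
      simp only [Search.finalTape, Function.update_apply] at hj
      simp only [List.length_replicate]
      split_ifs at hj <;> (push_cast; omega)
    · intro _
      exact ⟨rfl, rfl⟩
  · rintro t ⟨f, w, h, hw⟩
    exact Search.lower t f w h hw
end

section
/- For every natural number n with 1 ≤ n ≤ 12, the Placid Platypus function satisfies: PP(n) is the unique k ∈ {1,2,3,4} with BB(k−1) < n ≤ BB(k), where BB(0) = 0; explicitly, PP(1) = 1, PP(n) = 2 for 2 ≤ n ≤ 4, PP(n) = 3 for 5 ≤ n ≤ 6, and PP(n) = 4 for 7 ≤ n ≤ 12. -/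
namespace PP

inductive St | A | B | C

structure Mv where
  q : St
  b : Bool
  d : Bool

structure Tab where
  a0 : Option Mv
  a1 : Option Mv
  b0 : Option Mv
  b1 : Option Mv
  c0 : Option Mv
  c1 : Option Mv

/-- Table lookup. -/
@[reducible] noncomputable def Tab.get (T : Tab) (q : St) (s : Bool) : Option Mv :=
  Tab.rec (fun a0 a1 b0 b1 c0 c1 =>
    St.rec (Bool.rec a0 a1 s) (Bool.rec b0 b1 s) (Bool.rec c0 c1 s) q) T

/-- Table update. -/
noncomputable def Tab.set (T : Tab) (q : St) (s : Bool) (m : Mv) : Tab :=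
  Tab.rec (fun a0 a1 b0 b1 c0 c1 =>
    St.rec
      (Bool.rec (Tab.mk (some m) a1 b0 b1 c0 c1) (Tab.mk a0 (some m) b0 b1 c0 c1) s)
      (Bool.rec (Tab.mk a0 a1 (some m) b1 c0 c1) (Tab.mk a0 a1 b0 (some m) c0 c1) s)
      (Bool.rec (Tab.mk a0 a1 b0 b1 (some m) c1) (Tab.mk a0 a1 b0 b1 c0 (some m)) s) q) T

/-- Force evaluation of a natural number. -/
noncomputable def frc {α : Type} (n : ℕ) (k : ℕ → α) : α :=
  Nat.rec (k 0) (fun m _ => k (Nat.succ m)) n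

noncomputable def stOf (n : ℕ) : St :=
  Nat.rec St.A (fun m _ => Nat.rec St.B (fun _ _ => St.C) m) n

noncomputable def codeOf (q : St) : ℕ := St.rec 0 1 2 q

noncomputable def memL (x : ℕ) (l : List ℕ) : Bool :=
  List.rec false (fun a _ ih => Bool.rec ih true (Nat.beq x a)) l

noncomputable def enc (B Bn q s l r : ℕ) : ℕ :=
  Nat.add q (Nat.mul 3 (Nat.add s (Nat.mul B (Nat.add l (Nat.mul Bn r)))))

/-- New cell. -/
noncomputable def newCell (P q s : ℕ) (b : Bool) : ℕ :=
  Nat.add (Bool.rec 0 1 b) (Nat.mul 2 (Nat.mod (Nat.add (Nat.add 1 (Nat.add q (Nat.mul 3 (Nat.mod s 2))))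
    (Nat.mul 7 (Nat.div s 2))) P))

/-- Push the successors. -/
noncomputable def pushAll {S : Type} (mem : S → ℕ → Bool) (ins : S → ℕ → S) (Bm key : ℕ)
    (code : ℕ → ℕ) (gs : List ℕ) (k : List ℕ → S → Bool) : List ℕ → S → Bool :=
  List.rec k (fun g _ ih todo seen =>
    Bool.rec (ih todo seen)
      (frc (code g) fun c => Bool.rec (ih (c :: todo) (ins seen c)) (ih todo seen) (mem seen c))
      (Nat.beq (Nat.mod g Bm) key)) gs

noncomputable def run {S : Type} (T : Tab) (mem : S → ℕ → Bool) (ins : S → ℕ → S) (e : S)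
    (P B Bn Bm : ℕ) (fuel : ℕ) : List ℕ → List ℕ → List ℕ → S → Bool :=
  Nat.rec (fun _ _ _ _ => false)
    (fun _ ih Lg Rg todo seen =>
      List.rec true (fun c todo _ =>
        frc (Nat.mod c 3) fun q =>
        frc (Nat.mod (Nat.div c 3) B) fun s =>
        frc (Nat.mod (Nat.div (Nat.div c 3) B) Bn) fun l =>
        frc (Nat.div (Nat.div (Nat.div c 3) B) Bn) fun r =>
        Option.rec false (fun m => Mv.rec (fun q' b d =>
          frc (newCell P q s b) fun w =>
          Bool.rec
            (Bool.rec
              (ih Lg (r :: Rg) (0 :: List.nil) (ins e 0))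
              (frc (Nat.mod (Nat.add w (Nat.mul B r)) Bn) fun r' =>
                frc (Nat.mod l B) fun s' =>
                frc (Nat.div l B) fun key =>
                pushAll mem ins Bm key (fun g => enc B Bn (codeOf q') s' g r') Lg
                  (fun todo seen => ih Lg Rg todo seen) todo seen)
              (memL r Rg))
            (Bool.rec
              (ih (l :: Lg) Rg (0 :: List.nil) (ins e 0))
              (frc (Nat.mod (Nat.add w (Nat.mul B l)) Bn) fun l' =>
                frc (Nat.mod r B) fun s' =>
                frc (Nat.div r B) fun key =>
                pushAll mem ins Bm key (fun g => enc B Bn (codeOf q') s' l' g) Rg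
                  (fun todo seen => ih Lg Rg todo seen) todo seen)
              (memL l Lg)) d) m)
          (T.get (stOf q) (Nat.beq (Nat.mod s 2) 1))) todo)
    fuel

noncomputable def memB (m c : ℕ) : Bool := Nat.beq (Nat.mod (Nat.div m (Nat.pow 2 c)) 2) 1
noncomputable def insB (m c : ℕ) : ℕ := Nat.lor m (Nat.pow 2 c)

noncomputable def runB (T : Tab) (Bn Bm fuel : ℕ) : Bool :=
  run T memB insB 0 1 2 Bn Bm fuel (0 :: List.nil) (0 :: List.nil) (0 :: List.nil) 1
noncomputable def runL (T : Tab) (P B Bn Bm fuel : ℕ) : Bool :=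
  run T (fun l x => memL x l) (fun l x => x :: l) List.nil P B Bn Bm fuel (0 :: List.nil) (0 :: List.nil) (0 :: List.nil) (0 :: List.nil)

noncomputable def dec (T : Tab) : Bool :=
  Bool.rec (Bool.rec (Bool.rec (runL T 49 98 9604 98 2000) true (runB T 8 4 1000)) true
    (runB T 4 2 1000)) true (runB T 2 1 1000)

noncomputable def ones (l : List Bool) (n : ℕ) : ℕ :=
  List.rec (fun n => n) (fun b _ ih n => Bool.rec (ih n) (ih (Nat.succ n)) b) l n

noncomputable def isS (o : Option Mv) : Bool := Option.rec false (fun _ => true) o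

noncomputable def fullTab (qs : List St) (T : Tab) : Bool :=
  List.rec true (fun q _ ih => Bool.rec false (Bool.rec false ih (isS (T.get q true))) (isS (T.get q false))) qs

noncomputable def allL {α : Type} (p : α → Bool) (l : List α) : Bool :=
  List.rec true (fun a _ ih => Bool.rec false ih (p a)) l

/-- Tape move. -/
noncomputable def mvTape {α : Type} (m : Mv) (L R : List Bool) (k : St → List Bool → Bool → List Bool → α) : α :=
  Mv.rec (fun q b d =>
    Bool.rec
      (List.rec (k q List.nil false (b :: R)) (fun x L' _ => k q L' x (b :: R)) L)
      (List.rec (k q (b :: L) false List.nil) (fun x R' _ => k q (b :: L) x R') R) d) m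

noncomputable def sr (qs : List St) (N : ℕ) (fuel : ℕ) : Tab → St → List Bool → Bool → List Bool → Bool :=
  Nat.rec (fun T _ _ _ _ => dec T)
    (fun _ ih T q L s R =>
      Option.rec
        (Bool.rec false
          (Bool.rec
            (allL (fun q' => allL (fun b => allL (fun d =>
                mvTape (Mv.mk q' b d) L R (ih (T.set q s (Mv.mk q' b d))))
              (true :: false :: List.nil)) (true :: false :: List.nil)) qs)
            true
            (fullTab qs (T.set q s (Mv.mk St.A true true))))
          (Nat.ble (ones L (ones R 1)) N))
        (fun m => mvTape m L R (ih T))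
        (T.get q s))
    fuel

open St in
noncomputable def root2 (N fuel : ℕ) : Bool :=
  sr (A :: B :: List.nil) N fuel (Tab.mk none none none none none none) A List.nil false List.nil
open St in
noncomputable def root1 (N fuel : ℕ) : Bool :=
  sr (A :: List.nil) N fuel (Tab.mk none none none none none none) A List.nil false List.nil
open St in
noncomputable def root3 (N fuel : ℕ) (b : Bool) : Bool :=
  sr (A :: B :: C :: List.nil) N fuel (Tab.mk (some (Mv.mk B b true)) none none none none none) A List.nil false List.nil
end PP

namespace PP

/-! ### Semantics of machines without stay moves on half-tapes -/

inductive Act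
  | halt (b : Bool)
  | loop
  | move (m : Mv)

structure Conf where
  q : St
  l : ℕ → Bool
  s : Bool
  r : ℕ → Bool

def cns {α : Type} (a : α) (h : ℕ → α) : ℕ → α
  | 0 => a
  | n + 1 => h n

def tl {α : Type} (h : ℕ → α) : ℕ → α := fun n => h (n + 1)

def Conf.mv (c : Conf) (m : Mv) : Conf :=
  if m.d = true then ⟨m.q, cns m.b c.l, c.r 0, tl c.r⟩
  else ⟨m.q, tl c.l, c.l 0, cns m.b c.r⟩

inductive HaltsTo (g : St → Bool → Act) (l : ℕ → Bool) (b : Bool) (r : ℕ → Bool) : Conf → Prop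
  | halt (c : Conf) : g c.q c.s = .halt b → c.l = l → c.r = r → HaltsTo g l b r c
  | step (c : Conf) (m : Mv) : g c.q c.s = .move m → HaltsTo g l b r (c.mv m) → HaltsTo g l b r c

def zf : ℕ → Bool := fun _ => false

def Conf.ini : Conf := ⟨St.A, zf, false, zf⟩

def Ext (T : Tab) (g : St → Bool → Act) : Prop :=
  ∀ q b m, T.get q b = some m → g q b = .move m

/-! ### Elementary evaluation lemmas -/

theorem frc_eq {α : Type} (n : ℕ) (k : ℕ → α) : frc n k = k n := by
  cases n <;> rfl

theorem memL_iff (x : ℕ) (l : List ℕ) : memL x l = true ↔ x ∈ l := by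
  induction l with
  | nil => simp [memL]
  | cons a l ih =>
    have : memL x (a :: l) = (Bool.rec (memL x l) true (Nat.beq x a) : Bool) := rfl
    rw [this]
    rcases h : Nat.beq x a with _ | _
    · have : x ≠ a := by intro e; subst e; simp at h
      simp [this, ih]
    · have : x = a := Nat.eq_of_beq_eq_true h
      simp [this]

def bit (x : ℕ) : Bool := Nat.beq (Nat.mod x 2) 1

theorem pushAll_spec {S : Type} (mem : S → ℕ → Bool) (ins : S → ℕ → S)
    (hins : ∀ s c d, mem (ins s c) d = true ↔ d = c ∨ mem s d = true)
    (Bm key : ℕ) (code : ℕ → ℕ) (gs : List ℕ) (k : List ℕ → S → Bool) :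
    ∀ (todo : List ℕ) (seen : S), pushAll mem ins Bm key code gs k todo seen = true →
    ∃ todo' seen', k todo' seen' = true ∧ (∀ c ∈ todo, c ∈ todo') ∧
      (∀ c, mem seen c = true → mem seen' c = true) ∧
      (∀ c, mem seen' c = true → mem seen c = true ∨ c ∈ todo') ∧
      (∀ g ∈ gs, g % Bm = key → mem seen' (code g) = true) := by
  induction gs with
  | nil =>
    intro todo seen h
    exact ⟨todo, seen, h, by simp, by simp, by simp +contextual, by simp⟩
  | cons g gs ih =>
    intro todo seen h
    have e : pushAll mem ins Bm key code (g :: gs) k todo seen =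
      (Bool.rec (pushAll mem ins Bm key code gs k todo seen)
        (frc (code g) fun c => Bool.rec (pushAll mem ins Bm key code gs k (c :: todo) (ins seen c))
          (pushAll mem ins Bm key code gs k todo seen) (mem seen c))
        (Nat.beq (Nat.mod g Bm) key) : Bool) := rfl
    rw [e, frc_eq] at h
    rcases hb : Nat.beq (Nat.mod g Bm) key with _ | _
    · rw [hb] at h
      have hne : g % Bm ≠ key := by
        intro e; change Nat.beq (g % Bm) key = false at hb; rw [e] at hb; simp at hb
      obtain ⟨t', s', h1, h2, h3, h4, h5⟩ := ih todo seen h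
      refine ⟨t', s', h1, h2, h3, h4, ?_⟩
      intro x hx hk
      rcases List.mem_cons.1 hx with rfl | hx
      · exact absurd hk hne
      · exact h5 x hx hk
    · rw [hb] at h
      rcases hm : mem seen (code g) with _ | _
      · simp only [hm] at h
        obtain ⟨t', s', h1, h2, h3, h4, h5⟩ := ih _ _ h
        refine ⟨t', s', h1, fun c hc => h2 c (List.mem_cons_of_mem _ hc),
          fun c hc => h3 c ((hins _ _ _).2 (Or.inr hc)), ?_, ?_⟩
        · intro c hc
          rcases h4 c hc with h | h
          · rcases (hins _ _ _).1 h with rfl | h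
            · exact Or.inr (h2 _ List.mem_cons_self)
            · exact Or.inl h
          · exact Or.inr h
        · intro x hx hk
          rcases List.mem_cons.1 hx with rfl | hx
          · exact h3 _ ((hins _ _ _).2 (Or.inl rfl))
          · exact h5 x hx hk
      · simp only [hm] at h
        obtain ⟨t', s', h1, h2, h3, h4, h5⟩ := ih _ _ h
        refine ⟨t', s', h1, h2, h3, h4, ?_⟩
        intro x hx hk
        rcases List.mem_cons.1 hx with rfl | hx
        · exact h3 _ hm
        · exact h5 x hx hk

/-- Local closure condition for one context. -/
def CtxOK (T : Tab) (P B Bn Bm : ℕ) (mem : ℕ → Prop) (Lg Rg : List ℕ) (q s l r : ℕ) : Prop :=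
  ∃ m : Mv, T.get (stOf q) (bit s) = some m ∧
    (m.d = true → l ∈ Lg ∧ ∀ g ∈ Rg, g % Bm = r / B →
      mem (enc B Bn (codeOf m.q) (r % B) ((newCell P q s m.b + B * l) % Bn) g)) ∧
    (m.d = false → r ∈ Rg ∧ ∀ g ∈ Lg, g % Bm = l / B →
      mem (enc B Bn (codeOf m.q) (l % B) g ((newCell P q s m.b + B * r) % Bn)))

def CodeOK (T : Tab) (P B Bn Bm : ℕ) (mem : ℕ → Prop) (Lg Rg : List ℕ) (c : ℕ) : Prop :=
  CtxOK T P B Bn Bm mem Lg Rg (c % 3) (c / 3 % B) (c / 3 / B % Bn) (c / 3 / B / Bn)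

theorem CodeOK.mono {T : Tab} {P B Bn Bm : ℕ} {mem mem' : ℕ → Prop} {Lg Rg : List ℕ} {c : ℕ}
    (h : CodeOK T P B Bn Bm mem Lg Rg c) (hm : ∀ c, mem c → mem' c) :
    CodeOK T P B Bn Bm mem' Lg Rg c := by
  obtain ⟨m, h1, h2, h3⟩ := h
  exact ⟨m, h1, fun hd => ⟨(h2 hd).1, fun g hg hk => hm _ ((h2 hd).2 g hg hk)⟩,
    fun hd => ⟨(h3 hd).1, fun g hg hk => hm _ ((h3 hd).2 g hg hk)⟩⟩

/-- Existence of a closed set of contexts. -/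
def HasClosed (T : Tab) (P B Bn Bm : ℕ) : Prop :=
  ∃ (mem : ℕ → Prop) (Lg Rg : List ℕ), 0 ∈ Lg ∧ 0 ∈ Rg ∧ mem 0 ∧
    ∀ c, mem c → CodeOK T P B Bn Bm mem Lg Rg c

theorem run_cons {S : Type} (T : Tab) (mem : S → ℕ → Bool) (ins : S → ℕ → S) (e : S)
    (P B Bn Bm fuel c : ℕ) (Lg Rg todo : List ℕ) (seen : S) :
    run T mem ins e P B Bn Bm (fuel + 1) Lg Rg (c :: todo) seen =
    Option.rec (motive := fun _ => Bool) false (fun m =>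
      Bool.rec
        (Bool.rec
          (run T mem ins e P B Bn Bm fuel Lg (c / 3 / B / Bn :: Rg) (0 :: List.nil) (ins e 0))
          (pushAll mem ins Bm (c / 3 / B % Bn / B)
            (fun g => enc B Bn (codeOf m.q) (c / 3 / B % Bn % B) g
              ((newCell P (c % 3) (c / 3 % B) m.b + B * (c / 3 / B / Bn)) % Bn)) Lg
            (fun todo seen => run T mem ins e P B Bn Bm fuel Lg Rg todo seen) todo seen)
          (memL (c / 3 / B / Bn) Rg))
        (Bool.rec
          (run T mem ins e P B Bn Bm fuel (c / 3 / B % Bn :: Lg) Rg (0 :: List.nil) (ins e 0))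
          (pushAll mem ins Bm (c / 3 / B / Bn / B)
            (fun g => enc B Bn (codeOf m.q) (c / 3 / B / Bn % B)
              ((newCell P (c % 3) (c / 3 % B) m.b + B * (c / 3 / B % Bn)) % Bn) g) Rg
            (fun todo seen => run T mem ins e P B Bn Bm fuel Lg Rg todo seen) todo seen)
          (memL (c / 3 / B % Bn) Lg)) m.d)
      (T.get (stOf (c % 3)) (bit (c / 3 % B))) := by
  unfold run
  simp only [frc_eq]
  rfl

theorem run_sound {S : Type} (T : Tab) (mem : S → ℕ → Bool) (ins : S → ℕ → S) (e : S)
    (hins : ∀ s c d, mem (ins s c) d = true ↔ d = c ∨ mem s d = true)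
    (he : ∀ d, mem e d = false)
    (P B Bn Bm : ℕ) (fuel : ℕ) : ∀ (Lg Rg todo : List ℕ) (seen : S),
    run T mem ins e P B Bn Bm fuel Lg Rg todo seen = true → 0 ∈ Lg → 0 ∈ Rg →
    mem seen 0 = true →
    (∀ c, mem seen c = true →
      c ∈ todo ∨ CodeOK T P B Bn Bm (fun d => mem seen d = true) Lg Rg c) →
    HasClosed T P B Bn Bm := by
  induction fuel with
  | zero => intro Lg Rg todo seen h; exact absurd h (by simp [run])
  | succ fuel ih =>
    intro Lg Rg todo seen h hL hR h0 hinv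
    have hini : ∀ Lg' Rg' : List ℕ, ∀ c, mem (ins e 0) c = true → c ∈ 0 :: List.nil ∨
        CodeOK T P B Bn Bm (fun d => mem (ins e 0) d = true) Lg' Rg' c := by
      intro Lg' Rg' c hc
      rcases (hins _ _ _).1 hc with rfl | hc
      · exact Or.inl List.mem_cons_self
      · rw [he] at hc; exact absurd hc (by simp)
    have hini0 : mem (ins e 0) 0 = true := (hins _ _ _).2 (Or.inl rfl)
    cases todo with
    | nil =>
      refine ⟨fun d => mem seen d = true, Lg, Rg, hL, hR, h0, ?_⟩
      intro c hc
      rcases hinv c hc with h | h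
      · simp at h
      · exact h
    | cons c todo =>
      rcases hm : T.get (stOf (c % 3)) (bit (c / 3 % B)) with _ | m
      · exfalso
        rw [run_cons, hm] at h
        simp at h
      · obtain ⟨q', b, d⟩ := m
        rw [run_cons, hm] at h
        -- the generic continuation
        have fin : ∀ todo' seen', run T mem ins e P B Bn Bm fuel Lg Rg todo' seen' = true →
            (∀ c ∈ todo, c ∈ todo') →
            (∀ c, mem seen c = true → mem seen' c = true) →
            (∀ c, mem seen' c = true → mem seen c = true ∨ c ∈ todo') →
            CodeOK T P B Bn Bm (fun d => mem seen' d = true) Lg Rg c →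
            HasClosed T P B Bn Bm := by
          intro todo' seen' h1 h2 h3 h4 h5
          refine ih Lg Rg todo' seen' h1 hL hR (h3 _ h0) ?_
          intro x hx
          rcases h4 x hx with hx | hx
          · rcases hinv x hx with hx | hx
            · rcases List.mem_cons.1 hx with rfl | hx
              · exact Or.inr h5
              · exact Or.inl (h2 _ hx)
            · exact Or.inr (hx.mono h3)
          · exact Or.inl hx
        cases d with
        | false =>
          rcases hg : memL (c / 3 / B / Bn) Rg with _ | _
          · simp only [hg] at h
            exact ih _ _ _ _ h hL (List.mem_cons_of_mem _ hR) hini0 (hini _ _)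
          · simp only [hg] at h
            obtain ⟨t', s', h1, h2, h3, h4, h5⟩ := pushAll_spec mem ins hins _ _ _ _ _ _ _ h
            refine fin t' s' h1 h2 h3 h4 ⟨_, hm, by simp, fun _ => ⟨(memL_iff _ _).1 hg, ?_⟩⟩
            intro g hg hk
            exact h5 g hg hk
        | true =>
          rcases hg : memL (c / 3 / B % Bn) Lg with _ | _
          · simp only [hg] at h
            exact ih _ _ _ _ h (List.mem_cons_of_mem _ hL) hR hini0 (hini _ _)
          · simp only [hg] at h
            obtain ⟨t', s', h1, h2, h3, h4, h5⟩ := pushAll_spec mem ins hins _ _ _ _ _ _ _ h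
            refine fin t' s' h1 h2 h3 h4 ⟨_, hm, fun _ => ⟨(memL_iff _ _).1 hg, ?_⟩, by simp⟩
            intro g hg hk
            exact h5 g hg hk

theorem runL_sound (T : Tab) (P B Bn Bm fuel : ℕ) (h : runL T P B Bn Bm fuel = true) :
    HasClosed T P B Bn Bm := by
  refine run_sound T _ _ _ ?_ ?_ P B Bn Bm fuel _ _ _ _ h (by simp) (by simp) ?_ ?_
  · intro s c d; simp [memL_iff]
  · intro d; rfl
  · rfl
  · intro c hc
    left
    simpa [memL_iff] using hc

theorem memB_eq (m c : ℕ) : memB m c = Nat.testBit m c := by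
  rw [Nat.testBit_eq_decide_div_mod_eq]
  change Nat.beq (m / 2 ^ c % 2) 1 = _
  rw [Bool.eq_iff_iff]
  simp

theorem runB_sound (T : Tab) (Bn Bm fuel : ℕ) (h : runB T Bn Bm fuel = true) :
    HasClosed T 1 2 Bn Bm := by
  refine run_sound T _ _ _ ?_ ?_ 1 2 Bn Bm fuel _ _ _ _ h (by simp) (by simp) ?_ ?_
  · intro s c d
    simp only [memB_eq]
    change Nat.testBit (s ||| 2 ^ c) d = true ↔ _
    rw [Nat.testBit_or, Nat.testBit_two_pow]
    simp
    tauto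
  · intro d; simp [memB_eq]
  · simp [memB_eq]
  · intro c hc
    left
    rw [memB_eq] at hc
    simpa [Nat.testBit_one_eq_true_iff_self_eq_zero] using hc

/-! ### Grams -/

def G (B : ℕ) : ℕ → (ℕ → ℕ) → ℕ
  | 0, _ => 0
  | n + 1, h => h 0 + B * G B n (tl h)

theorem G_last (B n : ℕ) : ∀ h, G B (n + 1) h = G B n h + B ^ n * h n := by
  induction n with
  | zero => intro h; simp [G]
  | succ n ih =>
    intro h
    rw [G, ih (tl h)]
    simp only [G, tl]
    ring

theorem G_lt (B n : ℕ) : ∀ h : ℕ → ℕ, (∀ i, h i < B) → G B n h < B ^ n := by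
  induction n with
  | zero => intro h _; simp [G]
  | succ n ih =>
    intro h hh
    have h1 := ih (tl h) (fun i => hh _)
    have h2 := hh 0
    rw [G, pow_succ]
    calc h 0 + B * G B n (tl h) < B + B * G B n (tl h) := by omega
      _ = B * (G B n (tl h) + 1) := by ring
      _ ≤ B * B ^ n := Nat.mul_le_mul_left _ h1
      _ = B ^ n * B := by ring

theorem G_push (B m w : ℕ) (h : ℕ → ℕ) (hh : ∀ i, h i < B) (hw : w < B) :
    (w + B * G B (m + 1) h) % B ^ (m + 1) = G B (m + 1) (cns w h) := by
  have e : w + B * G B (m + 1) h = G B (m + 1) (cns w h) + B ^ (m + 1) * h m := by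
    rw [G_last, G, pow_succ]
    change _ = w + B * G B m h + _
    ring
  rw [e, Nat.add_mul_mod_self_left, Nat.mod_eq_of_lt]
  apply G_lt
  intro i
  cases i with
  | zero => exact hw
  | succ i => exact hh i

theorem G_head (B m : ℕ) (h : ℕ → ℕ) (hh : ∀ i, h i < B) : G B (m + 1) h % B = h 0 := by
  rw [G, Nat.add_mul_mod_self_left, Nat.mod_eq_of_lt (hh 0)]

theorem G_tail (B m : ℕ) (h : ℕ → ℕ) (hh : ∀ i, h i < B) :
    G B (m + 1) (tl h) % B ^ m = G B (m + 1) h / B := by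
  have hB : 0 < B := lt_of_le_of_lt (Nat.zero_le _) (hh 0)
  rw [G_last, Nat.add_mul_mod_self_left, Nat.mod_eq_of_lt (G_lt _ _ (tl h) (fun i => hh _)), G,
    Nat.add_mul_div_left _ _ hB, Nat.div_eq_of_lt (hh 0), zero_add]

theorem G_zero (B n : ℕ) : G B n (fun _ => 0) = 0 := by
  induction n with
  | zero => rfl
  | succ n ih => rw [G]; change 0 + B * G B n (fun _ => 0) = 0; rw [ih]; simp

theorem newCell_lt (P q s : ℕ) (b : Bool) (hP : 0 < P) : newCell P q s b < 2 * P := by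
  change (Bool.rec 0 1 b : ℕ) + 2 * ((1 + (q + 3 * (s % 2)) + 7 * (s / 2)) % P) < 2 * P
  have := Nat.mod_lt (1 + (q + 3 * (s % 2)) + 7 * (s / 2)) hP
  cases b <;> simp only <;> omega

theorem newCell_bit (P q s : ℕ) (b : Bool) : bit (newCell P q s b) = b := by
  change Nat.beq (((Bool.rec 0 1 b : ℕ) +
    2 * ((1 + (q + 3 * (s % 2)) + 7 * (s / 2)) % P)) % 2) 1 = b
  rw [Nat.add_mul_mod_self_left]
  cases b <;> rfl

theorem stOf_codeOf (q : St) : stOf (codeOf q) = q := by cases q <;> rfl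

theorem codeOf_lt (q : St) : codeOf q < 3 := by cases q <;> decide +kernel

theorem enc_decode (B Bn q s l r : ℕ) (hq : q < 3) (hs : s < B) (hl : l < Bn) :
    enc B Bn q s l r % 3 = q ∧ enc B Bn q s l r / 3 % B = s ∧
    enc B Bn q s l r / 3 / B % Bn = l ∧ enc B Bn q s l r / 3 / B / Bn = r := by
  have hB : 0 < B := by omega
  have hBn : 0 < Bn := by omega
  change (q + 3 * (s + B * (l + Bn * r))) % 3 = q ∧ (q + 3 * (s + B * (l + Bn * r))) / 3 % B = s ∧
    (q + 3 * (s + B * (l + Bn * r))) / 3 / B % Bn = l ∧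
    (q + 3 * (s + B * (l + Bn * r))) / 3 / B / Bn = r
  have e1 : (q + 3 * (s + B * (l + Bn * r))) / 3 = s + B * (l + Bn * r) := by omega
  have e2 : (s + B * (l + Bn * r)) / B = l + Bn * r := by
    rw [Nat.add_mul_div_left _ _ hB, Nat.div_eq_of_lt hs, zero_add]
  rw [e1, e2]
  refine ⟨by omega, ?_, ?_, ?_⟩
  · rw [Nat.add_mul_mod_self_left, Nat.mod_eq_of_lt hs]
  · rw [Nat.add_mul_mod_self_left, Nat.mod_eq_of_lt hl]
  · rw [Nat.add_mul_div_left _ _ hBn, Nat.div_eq_of_lt hl, zero_add]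

/-- Abstraction invariant. -/
structure CInv (B m : ℕ) (mem : ℕ → Prop) (Lg Rg : List ℕ) (c : Conf) (l : ℕ → ℕ) (s : ℕ)
    (r : ℕ → ℕ) : Prop where
  hl : ∀ i, l i < B
  hs : s < B
  hr : ∀ i, r i < B
  el : ∀ i, c.l i = bit (l i)
  es : c.s = bit s
  er : ∀ i, c.r i = bit (r i)
  hm : mem (enc B (B ^ (m + 1)) (codeOf c.q) s (G B (m + 1) l) (G B (m + 1) r))
  gl : ∀ i, G B (m + 1) (fun j => l (j + (i + 1))) ∈ Lg
  gr : ∀ i, G B (m + 1) (fun j => r (j + (i + 1))) ∈ Rg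

theorem closed_no_halt (T : Tab) (P m : ℕ) (hP : 0 < P)
    (hc : HasClosed T P (2 * P) ((2 * P) ^ (m + 1)) ((2 * P) ^ m))
    (g : St → Bool → Act) (hg : Ext T g) (fl : ℕ → Bool) (fb : Bool) (fr : ℕ → Bool) :
    ¬ HaltsTo g fl fb fr Conf.ini := by
  obtain ⟨mem, Lg, Rg, h0L, h0R, h0, hcl⟩ := hc
  have key : ∀ c, HaltsTo g fl fb fr c → ∀ l s r, ¬ CInv (2 * P) m mem Lg Rg c l s r := by
    intro c hh
    -- one-step analysis
    have act : ∀ c l s r, CInv (2 * P) m mem Lg Rg c l s r → ∃ mv, g c.q c.s = .move mv ∧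
        ∃ l' s' r', CInv (2 * P) m mem Lg Rg (c.mv mv) l' s' r' := by
      intro c l s r hI
      have hx := hcl _ hI.hm
      obtain ⟨d1, d2, d3, d4⟩ := enc_decode (2 * P) ((2 * P) ^ (m + 1)) (codeOf c.q) s
        (G (2 * P) (m + 1) l) (G (2 * P) (m + 1) r) (codeOf_lt _) hI.hs (G_lt _ _ _ hI.hl)
      unfold CodeOK at hx
      rw [d1, d2, d3, d4] at hx
      obtain ⟨mv, hget, hR, hL⟩ := hx
      rw [stOf_codeOf, ← hI.es] at hget
      refine ⟨mv, hg _ _ _ hget, ?_⟩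
      have hw := newCell_lt P (codeOf c.q) s mv.b hP
      have hwb := newCell_bit P (codeOf c.q) s mv.b
      set w := newCell P (codeOf c.q) s mv.b with hwdef
      rcases hd : mv.d with _ | _
      · obtain ⟨k1, k2⟩ := hL hd
        have k3 := k2 (G (2 * P) (m + 1) (tl l)) (hI.gl 0) (G_tail _ _ _ hI.hl)
        rw [G_head _ _ _ hI.hl, G_push _ _ _ _ hI.hr hw] at k3
        refine ⟨tl l, l 0, cns w r, ?_⟩
        have e : c.mv mv = ⟨mv.q, tl c.l, c.l 0, cns mv.b c.r⟩ := by simp [Conf.mv, hd]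
        rw [e]
        refine ⟨fun i => hI.hl _, hI.hl 0, ?_, fun i => hI.el _, hI.el 0, ?_, k3, ?_, ?_⟩
        · intro i; cases i with
          | zero => exact hw
          | succ i => exact hI.hr i
        · intro i; cases i with
          | zero => exact hwb.symm
          | succ i => exact hI.er i
        · intro i; exact hI.gl (i + 1)
        · intro i; cases i with
          | zero => exact k1
          | succ i => exact hI.gr i
      · obtain ⟨k1, k2⟩ := hR hd
        have k3 := k2 (G (2 * P) (m + 1) (tl r)) (hI.gr 0) (G_tail _ _ _ hI.hr)
        rw [G_head _ _ _ hI.hr, G_push _ _ _ _ hI.hl hw] at k3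
        refine ⟨cns w l, r 0, tl r, ?_⟩
        have e : c.mv mv = ⟨mv.q, cns mv.b c.l, c.r 0, tl c.r⟩ := by simp [Conf.mv, hd]
        rw [e]
        refine ⟨?_, hI.hr 0, fun i => hI.hr _, ?_, hI.er 0, fun i => hI.er _, k3, ?_, ?_⟩
        · intro i; cases i with
          | zero => exact hw
          | succ i => exact hI.hl i
        · intro i; cases i with
          | zero => exact hwb.symm
          | succ i => exact hI.el i
        · intro i; cases i with
          | zero => exact k1
          | succ i => exact hI.gl i
        · intro i; exact hI.gr (i + 1)
    induction hh with
    | halt c h1 _ _ =>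
      intro l s r hI
      obtain ⟨mv, h, _⟩ := act c l s r hI
      rw [h1] at h; cases h
    | step c m' h1 _ ih =>
      intro l s r hI
      obtain ⟨mv, h, l', s', r', hI'⟩ := act c l s r hI
      rw [h1] at h; cases h
      exact ih _ _ _ hI'
  intro hh
  have hB : 0 < 2 * P := by omega
  have hz : ∀ n, G (2 * P) n (fun _ => 0) = 0 := G_zero _
  refine key _ hh (fun _ => 0) 0 (fun _ => 0)
    ⟨fun _ => hB, hB, fun _ => hB, fun _ => rfl, rfl, fun _ => rfl, ?_, ?_, ?_⟩
  · rw [hz]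
    have : enc (2 * P) ((2 * P) ^ (m + 1)) (codeOf Conf.ini.q) 0 0 0 = 0 := by
      change 0 + 3 * (0 + 2 * P * (0 + (2 * P) ^ (m + 1) * 0)) = 0
      simp
    rw [this]; exact h0
  · intro i; rw [hz]; exact h0L
  · intro i; rw [hz]; exact h0R

theorem dec_sound (T : Tab) (h : dec T = true) (g : St → Bool → Act) (hg : Ext T g)
    (fl : ℕ → Bool) (fb : Bool) (fr : ℕ → Bool) : ¬ HaltsTo g fl fb fr Conf.ini := by
  unfold dec at h
  rcases h1 : runB T 2 1 1000 with _ | _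
  · rw [h1] at h
    rcases h2 : runB T 4 2 1000 with _ | _
    · rw [h2] at h
      rcases h3 : runB T 8 4 1000 with _ | _
      · rw [h3] at h
        exact closed_no_halt T 49 1 (by norm_num) (runL_sound _ _ _ _ _ _ h) g hg _ _ _
      · exact closed_no_halt T 1 2 (by norm_num) (runB_sound _ _ _ _ h3) g hg _ _ _
    · exact closed_no_halt T 1 1 (by norm_num) (runB_sound _ _ _ _ h2) g hg _ _ _
  · exact closed_no_halt T 1 0 (by norm_num) (runB_sound _ _ _ _ h1) g hg _ _ _

end PP

namespace PP

/-! ### Soundness of the search -/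

def lf (L : List Bool) : ℕ → Bool := fun i => L.getD i false

theorem lf_nil : lf [] = zf := by funext i; simp [lf, zf]

theorem lf_cons (b : Bool) (L : List Bool) : lf (b :: L) = cns b (lf L) := by
  funext i; cases i <;> simp [lf, cns]

theorem tl_cns (b : Bool) (h : ℕ → Bool) : tl (cns b h) = h := rfl

theorem tl_zf : tl zf = zf := rfl

def Bounded (N : ℕ) (l : ℕ → Bool) (b : Bool) (r : ℕ → Bool) : Prop :=
  ∃ L R : List Bool, l = lf L ∧ r = lf R ∧ L.count true + R.count true + b.toNat ≤ N

theorem ones_eq (l : List Bool) : ∀ n, ones l n = l.count true + n := by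
  induction l with
  | nil => intro n; simp [ones]
  | cons b l ih =>
    intro n
    cases b with
    | false =>
      change ones l n = _
      rw [ih]; simp
    | true =>
      change ones l (n + 1) = _
      rw [ih]; simp; omega

theorem allL_spec {α : Type} (p : α → Bool) (l : List α) (h : allL p l = true) :
    ∀ a ∈ l, p a = true := by
  induction l with
  | nil => simp
  | cons a l ih =>
    have e : allL p (a :: l) = (Bool.rec false (allL p l) (p a) : Bool) := rfl
    rw [e] at h
    rcases hp : p a with _ | _
    · rw [hp] at h; exact absurd h (by simp)
    · rw [hp] at h
      intro x hx
      rcases List.mem_cons.1 hx with rfl | hx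
      · exact hp
      · exact ih h x hx

theorem get_set_self (T : Tab) (q : St) (s : Bool) (m : Mv) : (T.set q s m).get q s = some m := by
  cases q <;> cases s <;> rfl

theorem get_set (T : Tab) (q : St) (s : Bool) (m : Mv) (q' : St) (s' : Bool) (m' : Mv)
    (h : (T.set q s m).get q' s' = some m') : (q' = q ∧ s' = s ∧ m' = m) ∨ T.get q' s' = some m' := by
  cases q <;> cases s <;> cases q' <;> cases s' <;>
    first
    | exact Or.inr h
    | exact Or.inl ⟨rfl, rfl, (Option.some.inj h).symm⟩

theorem ext_set {T : Tab} {g : St → Bool → Act} (hg : Ext T g) {q : St} {s : Bool} {m : Mv}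
    (h : g q s = .move m) : Ext (T.set q s m) g := by
  intro q' s' m' h'
  rcases get_set _ _ _ _ _ _ _ h' with ⟨rfl, rfl, rfl⟩ | h'
  · exact h
  · exact hg _ _ _ h'

theorem isS_iff (o : Option Mv) : isS o = true ↔ ∃ m, o = some m := by
  cases o <;> simp [isS]

theorem fullTab_spec (qs : List St) (T : Tab) (h : fullTab qs T = true) :
    ∀ q ∈ qs, ∀ s, ∃ m, T.get q s = some m := by
  induction qs with
  | nil => simp
  | cons q qs ih =>
    have e : fullTab (q :: qs) T = (Bool.rec false (Bool.rec false (fullTab qs T)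
      (isS (T.get q true))) (isS (T.get q false)) : Bool) := rfl
    rw [e] at h
    rcases h1 : isS (T.get q false) with _ | _
    · rw [h1] at h; exact absurd h (by simp)
    · rcases h2 : isS (T.get q true) with _ | _
      · rw [h1, h2] at h; exact absurd h (by simp)
      · rw [h1, h2] at h
        intro x hx s
        rcases List.mem_cons.1 hx with rfl | hx
        · cases s
          · exact (isS_iff _).1 h1
          · exact (isS_iff _).1 h2
        · exact ih h x hx s

def Closed (qs : List St) (g : St → Bool → Act) : Prop := ∀ q s m, g q s = .move m → m.q ∈ qs

theorem mv_q (c : Conf) (m : Mv) : (c.mv m).q = m.q := by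
  unfold Conf.mv; split <;> rfl

theorem full_no_halt (qs : List St) (g : St → Bool → Act) (hc : Closed qs g)
    (hf : ∀ q ∈ qs, ∀ s, ∃ m, g q s = .move m) (l : ℕ → Bool) (b : Bool) (r : ℕ → Bool) (c : Conf)
    (h : HaltsTo g l b r c) : c.q ∉ qs := by
  induction h with
  | halt c h _ _ =>
    intro hq
    obtain ⟨m, hm⟩ := hf _ hq c.s
    rw [h] at hm; cases hm
  | step c m h _ ih =>
    intro _
    apply ih
    rw [mv_q]
    exact hc _ _ _ h

theorem mvTape_spec (m : Mv) (L R : List Bool) (q : St) (s : Bool)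
    (k : St → List Bool → Bool → List Bool → Bool) (h : mvTape m L R k = true) :
    ∃ q' L' s' R', k q' L' s' R' = true ∧
      (⟨q, lf L, s, lf R⟩ : Conf).mv m = ⟨q', lf L', s', lf R'⟩ := by
  obtain ⟨q', b, d⟩ := m
  cases d with
  | false =>
    cases L with
    | nil =>
      refine ⟨q', [], false, b :: R, h, ?_⟩
      simp [Conf.mv, lf_nil, lf_cons, tl_zf, zf]
    | cons x L =>
      refine ⟨q', L, x, b :: R, h, ?_⟩
      simp [Conf.mv, lf_cons, tl_cns, cns]
  | true =>
    cases R with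
    | nil =>
      refine ⟨q', b :: L, false, [], h, ?_⟩
      simp [Conf.mv, lf_nil, lf_cons, tl_zf, zf]
    | cons x R =>
      refine ⟨q', b :: L, x, R, h, ?_⟩
      simp [Conf.mv, lf_cons, tl_cns, cns]

theorem sr_succ (qs : List St) (N fuel : ℕ) (T : Tab) (q : St) (L : List Bool) (s : Bool)
    (R : List Bool) : sr qs N (fuel + 1) T q L s R =
      Option.rec (motive := fun _ => Bool)
        (Bool.rec false
          (Bool.rec
            (allL (fun q' => allL (fun b => allL (fun d =>
                mvTape (Mv.mk q' b d) L R (sr qs N fuel (T.set q s (Mv.mk q' b d))))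
              (true :: false :: List.nil)) (true :: false :: List.nil)) qs)
            true
            (fullTab qs (T.set q s (Mv.mk St.A true true))))
          (Nat.ble (ones L (ones R 1)) N))
        (fun m => mvTape m L R (sr qs N fuel T))
        (T.get q s) := rfl

theorem sr_sound (qs : List St) (N : ℕ) (g : St → Bool → Act) (hc : Closed qs g)
    (l : ℕ → Bool) (b : Bool) (r : ℕ → Bool) (hini : HaltsTo g l b r Conf.ini) (fuel : ℕ) :
    ∀ (T : Tab) (q : St) (L : List Bool) (s : Bool) (R : List Bool), Ext T g → q ∈ qs →
    sr qs N fuel T q L s R = true → HaltsTo g l b r ⟨q, lf L, s, lf R⟩ → Bounded N l b r := by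
  induction fuel with
  | zero =>
    intro T q L s R hg _ h _
    exact absurd hini (dec_sound T h g hg _ _ _)
  | succ fuel ih =>
    intro T q L s R hg hq h hh
    rw [sr_succ] at h
    rcases hget : T.get q s with _ | m
    · simp only [hget] at h
      rcases hN : Nat.ble (ones L (ones R 1)) N with _ | _
      · rw [hN] at h; exact absurd h (by simp)
      · rw [hN] at h
        have hN' := Nat.le_of_ble_eq_true hN
        rw [ones_eq, ones_eq] at hN'
        cases hh with
        | halt _ h1 h2 h3 =>
          refine ⟨L, R, h2.symm, h3.symm, ?_⟩
          have : b.toNat ≤ 1 := by cases b <;> simp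
          omega
        | step _ m h1 h2 =>
          have h1 : g q s = .move m := h1
          have hq' := hc _ _ _ h1
          rcases hfull : fullTab qs (T.set q s (Mv.mk St.A true true)) with _ | _
          · simp only [hfull] at h
            obtain ⟨q', b', d'⟩ := m
            have h3 := allL_spec _ _ (allL_spec _ _ (allL_spec _ _ h q' hq') b'
              (by cases b' <;> simp)) d' (by cases d' <;> simp)
            obtain ⟨q2, L2, s2, R2, h4, h5⟩ := mvTape_spec _ L R q s _ h3
            rw [h5] at h2
            have : q2 ∈ qs := by
              have e := mv_q (⟨q, lf L, s, lf R⟩ : Conf) ⟨q', b', d'⟩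
              rw [h5] at e
              have e : q2 = q' := e
              rw [e]; exact hq'
            exact ih _ _ _ _ _ (ext_set hg h1) this h4 h2
          · exfalso
            refine full_no_halt qs g hc ?_ l b r _ h2 (by rw [mv_q]; exact hq')
            intro q1 hq1 s1
            obtain ⟨m1, hm1⟩ := fullTab_spec _ _ hfull q1 hq1 s1
            rcases get_set _ _ _ _ _ _ _ hm1 with ⟨rfl, rfl, _⟩ | h'
            · exact ⟨m, h1⟩
            · exact ⟨m1, hg _ _ _ h'⟩
    · simp only [hget] at h
      have hgm := hg _ _ _ hget
      obtain ⟨q2, L2, s2, R2, h4, h5⟩ := mvTape_spec _ L R q s _ h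
      cases hh with
      | halt _ h1 h2 h3 =>
        have h1 : g q s = _ := h1
        rw [hgm] at h1; cases h1
      | step _ m' h1 h2 =>
        have h1 : g q s = _ := h1
        rw [hgm] at h1; cases h1
        rw [h5] at h2
        have : q2 ∈ qs := by
          have e := mv_q (⟨q, lf L, s, lf R⟩ : Conf) m
          rw [h5] at e
          have e : q2 = m.q := e
          rw [e]; exact hc _ _ _ hgm
        exact ih _ _ _ _ _ hg this h4 h2

theorem ext_empty (g : St → Bool → Act) : Ext (Tab.mk none none none none none none) g := by
  intro q s m h
  cases q <;> cases s <;> cases h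

theorem ini_eq : Conf.ini = ⟨St.A, lf [], false, lf []⟩ := by rw [lf_nil]; rfl

theorem root1_true : root1 1 24 = true := by decide +kernel
theorem root2_true : root2 4 24 = true := by decide +kernel
theorem root3_false_true : root3 6 24 false = true := by decide +kernel
theorem root3_true_true : root3 6 24 true = true := by decide +kernel

theorem bound1 (g : St → Bool → Act) (hc : Closed [St.A] g)
    (l : ℕ → Bool) (b : Bool) (r : ℕ → Bool) (h : HaltsTo g l b r Conf.ini) : Bounded 1 l b r :=
  sr_sound _ 1 g hc l b r h 24 _ _ _ _ _ (ext_empty g) (by simp) root1_true (ini_eq ▸ h)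

theorem bound2 (g : St → Bool → Act) (hc : Closed [St.A, St.B] g)
    (l : ℕ → Bool) (b : Bool) (r : ℕ → Bool) (h : HaltsTo g l b r Conf.ini) : Bounded 4 l b r :=
  sr_sound _ 4 g hc l b r h 24 _ _ _ _ _ (ext_empty g) (by simp) root2_true (ini_eq ▸ h)

theorem mem3 (q : St) : q ∈ [St.A, St.B, St.C] := by cases q <;> simp

theorem ext_one {g : St → Bool → Act} {m : Mv} (h : g St.A false = .move m) :
    Ext (Tab.mk (some m) none none none none none) g := by
  intro q s m' h'
  cases q <;> cases s <;> cases h'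
  exact h

theorem bound3_base (g : St → Bool → Act) (b0 : Bool)
    (hm : g St.A false = .move ⟨St.B, b0, true⟩)
    (l : ℕ → Bool) (b : Bool) (r : ℕ → Bool) (h : HaltsTo g l b r Conf.ini) : Bounded 6 l b r := by
  have hr : root3 6 24 b0 = true := by
    cases b0
    · exact root3_false_true
    · exact root3_true_true
  exact sr_sound [St.A, St.B, St.C] 6 g (fun _ _ _ _ => mem3 _) l b r h 24 _ _ _ _ _ (ext_one hm)
    (mem3 _) hr (ini_eq ▸ h)

theorem decA (b d : Bool) : dec (Tab.mk (some ⟨St.A, b, d⟩) none none none none none) = true := by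
  cases b <;> cases d <;> decide +kernel

/-! ### Symmetries -/

def mir (g : St → Bool → Act) : St → Bool → Act := fun q s =>
  match g q s with
  | .move m => .move ⟨m.q, m.b, !m.d⟩
  | a => a

theorem mir_halts (g : St → Bool → Act) (l : ℕ → Bool) (b : Bool) (r : ℕ → Bool) (c : Conf)
    (h : HaltsTo g l b r c) : HaltsTo (mir g) r b l ⟨c.q, c.r, c.s, c.l⟩ := by
  induction h with
  | halt c h h2 h3 => exact .halt _ (by simp [mir, h]) h3 h2
  | step c m h _ ih =>
    refine .step _ ⟨m.q, m.b, !m.d⟩ (by simp [mir, h]) ?_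
    obtain ⟨q', b', d'⟩ := m
    cases d' <;> simpa [Conf.mv] using ih

def sw : St → St
  | .A => .A
  | .B => .C
  | .C => .B

theorem sw_sw (q : St) : sw (sw q) = q := by cases q <;> rfl

def swp (g : St → Bool → Act) : St → Bool → Act := fun q s =>
  match g (sw q) s with
  | .move m => .move ⟨sw m.q, m.b, m.d⟩
  | a => a

theorem swp_halts (g : St → Bool → Act) (l : ℕ → Bool) (b : Bool) (r : ℕ → Bool) (c : Conf)
    (h : HaltsTo g l b r c) : HaltsTo (swp g) l b r ⟨sw c.q, c.l, c.s, c.r⟩ := by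
  induction h with
  | halt c h h2 h3 => exact .halt _ (by simp [swp, sw_sw, h]) h2 h3
  | step c m h _ ih =>
    refine .step _ ⟨sw m.q, m.b, m.d⟩ (by simp [swp, sw_sw, h]) ?_
    obtain ⟨q', b', d'⟩ := m
    cases d' <;> simpa [Conf.mv] using ih

theorem bound3_right (g : St → Bool → Act) (m : Mv) (hm : g St.A false = .move m)
    (hd : m.d = true)
    (l : ℕ → Bool) (b : Bool) (r : ℕ → Bool) (h : HaltsTo g l b r Conf.ini) : Bounded 6 l b r := by
  obtain ⟨q, b0, d⟩ := m
  cases hd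
  cases q with
  | A => exact absurd h (dec_sound _ (decA b0 true) g (ext_one hm) _ _ _)
  | B => exact bound3_base g b0 hm l b r h
  | C =>
    refine bound3_base (swp g) b0 ?_ l b r (swp_halts _ _ _ _ _ h)
    simp [swp, sw, hm]

theorem bound3 (g : St → Bool → Act)
    (l : ℕ → Bool) (b : Bool) (r : ℕ → Bool) (h : HaltsTo g l b r Conf.ini) : Bounded 6 l b r := by
  have h' := h
  cases h with
  | halt _ h1 h2 h3 =>
    refine ⟨[], [], ?_, ?_, ?_⟩
    · rw [lf_nil]; exact h2.symm
    · rw [lf_nil]; exact h3.symm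
    · cases b <;> simp
  | step _ m h1 h2 =>
    rcases hd : m.d with _ | _
    · have h3 : Bounded 6 r b l := by
        refine bound3_right (mir g) ⟨m.q, m.b, !m.d⟩ ?_ (by simp [hd]) r b l (mir_halts _ _ _ _ _ h')
        have h1 : g St.A false = _ := h1
        simp [mir, h1]
      obtain ⟨L, R, e1, e2, e3⟩ := h3
      exact ⟨R, L, e2, e1, by omega⟩
    · exact bound3_right g m h1 hd l b r h'

/-! ### Removing stay moves -/

noncomputable def eff {k : ℕ} (f : Fin k × Bool → Option (Fin k × Bool × Dir)) : ℕ → Fin k → Bool → Act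
  | 0, _, _ => .loop
  | n + 1, q, b =>
    match f (q, b) with
    | none => .halt b
    | some (q', b', .stay) => eff f n q' b'
    | some (q', b', .left) => .move ⟨stOf q', b', false⟩
    | some (q', b', .right) => .move ⟨stOf q', b', true⟩

theorem eff_spec {k : ℕ} (f : Fin k × Bool → Option (Fin k × Bool × Dir)) (c' : Cfg (Fin k))
    (hh : Halted f c') (N : ℕ) : ∀ (s : ℕ) (c : Cfg (Fin k)), s < N → stepsTM f s c = some c' →
    (∃ b, eff f N c.state (c.tape c.head) = .halt b ∧ c'.head = c.head ∧
      c'.tape = Function.update c.tape c.head b) ∨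
    (∃ q b d s', s' < s ∧ eff f N c.state (c.tape c.head) = .move ⟨stOf (q : Fin k), b, d⟩ ∧
      stepsTM f s' ⟨q, c.head + (if d = true then 1 else -1), Function.update c.tape c.head b⟩
        = some c') := by
  induction N with
  | zero => intro s c hs; omega
  | succ N ih =>
    intro s c hs h
    rcases hf : f (c.state, c.tape c.head) with _ | ⟨q, b, d⟩
    · left
      have hst : stepTM f c = none := by simp [stepTM, hf]
      cases s with
      | zero =>
        simp only [stepsTM, Option.some.injEq] at h
        subst h
        exact ⟨_, by simp [eff, hf]; rfl, rfl, by simp⟩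
      | succ s => simp [stepsTM, hst] at h
    · cases s with
      | zero =>
        simp only [stepsTM, Option.some.injEq] at h
        subst h
        unfold Halted at hh
        rw [hf] at hh; cases hh
      | succ s =>
        have hst : stepTM f c =
            some ⟨q, c.head + d.move, Function.update c.tape c.head b⟩ := by simp [stepTM, hf]
        simp only [stepsTM, hst, Option.bind_some] at h
        cases d with
        | left =>
          right
          exact ⟨q, b, false, s, by omega, by simp [eff, hf], by simpa [Dir.move] using h⟩
        | right =>
          right
          exact ⟨q, b, true, s, by omega, by simp [eff, hf], by simpa [Dir.move] using h⟩
        | stay =>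
          simp only [Dir.move, add_zero] at h
          have e : eff f (N + 1) c.state (c.tape c.head) = eff f N q b := by simp [eff, hf]
          rw [e]
          rcases ih s _ (by omega) h with ⟨b2, h1, h2, h3⟩ | ⟨q2, b2, d2, s', h1, h2, h3⟩
          · left
            refine ⟨b2, by simpa using h1, h2, by simpa using h3⟩
          · right
            refine ⟨q2, b2, d2, s', by omega, by simpa using h2, by simpa using h3⟩

noncomputable def toConf {k : ℕ} (c : Cfg (Fin k)) : Conf :=
  ⟨stOf c.state, fun i => c.tape (c.head - 1 - i), c.tape c.head, fun i => c.tape (c.head + 1 + i)⟩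

theorem toConf_mv {k : ℕ} (c : Cfg (Fin k)) (q : Fin k) (b d : Bool) :
    toConf ⟨q, c.head + (if d = true then 1 else -1), Function.update c.tape c.head b⟩ =
      (toConf c).mv ⟨stOf q, b, d⟩ := by
  cases d with
  | false =>
    simp only [toConf, Conf.mv, Bool.false_eq_true, if_false]
    congr 1
    · funext i
      simp only [tl]
      rw [Function.update_of_ne (by omega)]
      congr 1; push_cast; ring
    · rw [Function.update_of_ne (by omega)]
      congr 1; simp; ring
    · funext i
      cases i with
      | zero => simp [cns]
      | succ i =>
        simp only [cns]
        rw [Function.update_of_ne (by push_cast; omega)]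
        congr 1; push_cast; ring
  | true =>
    simp only [toConf, Conf.mv, if_true]
    congr 1
    · funext i
      cases i with
      | zero => simp [cns]
      | succ i =>
        simp only [cns]
        rw [Function.update_of_ne (by push_cast; omega)]
        congr 1; push_cast; ring
    · rw [Function.update_of_ne (by omega)]
      congr 1; simp
    · funext i
      simp only [tl]
      rw [Function.update_of_ne (by omega)]
      congr 1; push_cast; ring

noncomputable def effG {k : ℕ} (f : Fin k × Bool → Option (Fin k × Bool × Dir)) (N : ℕ) : St → Bool → Act :=
  fun q b => if h : codeOf q < k then eff f N ⟨codeOf q, h⟩ b else .loop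

theorem codeOf_stOf (n : ℕ) (h : n < 3) : codeOf (stOf n) = n := by
  interval_cases n <;> rfl

theorem effG_eq {k : ℕ} (hk : k ≤ 3) (f : Fin k × Bool → Option (Fin k × Bool × Dir)) (N : ℕ)
    (q : Fin k) (b : Bool) : effG f N (stOf q) b = eff f N q b := by
  have e := codeOf_stOf q (by omega)
  unfold effG
  rw [dif_pos (by rw [e]; exact q.2)]
  congr 1
  exact Fin.ext e

theorem eff_move {k : ℕ} (f : Fin k × Bool → Option (Fin k × Bool × Dir)) (N : ℕ) :
    ∀ (q : Fin k) (b : Bool) (m : Mv), eff f N q b = .move m → ∃ q' : Fin k, m.q = stOf q' := by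
  induction N with
  | zero => intro q b m h; simp [eff] at h
  | succ N ih =>
    intro q b m h
    unfold eff at h
    split at h
    · cases h
    · exact ih _ _ _ h
    · cases h; exact ⟨_, rfl⟩
    · cases h; exact ⟨_, rfl⟩

theorem effG_move {k : ℕ} (f : Fin k × Bool → Option (Fin k × Bool × Dir)) (N : ℕ)
    (q : St) (b : Bool) (m : Mv) (h : effG f N q b = .move m) : ∃ q' : Fin k, m.q = stOf q' := by
  unfold effG at h
  split at h
  · exact eff_move _ _ _ _ _ h
  · cases h

theorem halts_of_steps {k : ℕ} (hk : k ≤ 3) (f : Fin k × Bool → Option (Fin k × Bool × Dir))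
    (c' : Cfg (Fin k)) (hh : Halted f c') (N : ℕ) : ∀ (s : ℕ) (c : Cfg (Fin k)), s < N →
    stepsTM f s c = some c' →
    HaltsTo (effG f N) (toConf c').l (toConf c').s (toConf c').r (toConf c) := by
  intro s
  induction s using Nat.strong_induction_on with
  | _ s ih =>
    intro c hs h
    rcases eff_spec f c' hh N s c hs h with ⟨b, h1, h2, h3⟩ | ⟨q, b, d, s', h1, h2, h3⟩
    · have hb : (toConf c').s = b := by simp [toConf, h2, h3]
      rw [hb]
      refine .halt _ ?_ ?_ ?_
      · exact (effG_eq hk f N _ _).trans h1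
      · funext i
        simp only [toConf, h2, h3]
        rw [Function.update_of_ne (by omega)]
      · funext i
        simp only [toConf, h2, h3]
        rw [Function.update_of_ne (by omega)]
    · refine .step _ _ ((effG_eq hk f N _ _).trans h2) ?_
      rw [← toConf_mv]
      exact ih s' h1 _ (by omega) h3

/-! ### Counting ones -/

theorem card_filter_getD (w : List Bool) :
    ((Finset.range w.length).filter (fun k => w.getD k false = true)).card = w.count true := by
  induction w using List.reverseRecOn with
  | nil => simp
  | append_singleton w b ih =>
    rw [List.length_append, List.length_singleton, Finset.range_add_one, Finset.filter_insert,
      List.count_append, ← ih]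
    have e : (Finset.range w.length).filter (fun k => (w ++ [b]).getD k false = true) =
        (Finset.range w.length).filter (fun k => w.getD k false = true) := by
      apply Finset.filter_congr
      intro k hk
      rw [List.getD_append _ _ _ _ (Finset.mem_range.1 hk)]
    rw [e]
    have e2 : (w ++ [b]).getD w.length false = b := by simp
    rw [e2]
    cases b <;> simp

theorem count_le (tape : ℤ → Bool) (h : ℤ) (w : List Bool) (hw : TapeWord tape w) (N : ℕ)
    (hb : Bounded N (fun i => tape (h - 1 - i)) (tape h) (fun i => tape (h + 1 + i))) :
    w.count true ≤ N := by
  obtain ⟨i, h1, _, _⟩ := hw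
  obtain ⟨L, R, hL, hR, hN⟩ := hb
  set FL := (Finset.range L.length).filter (fun k => L.getD k false = true) with hFL
  set FR := (Finset.range R.length).filter (fun k => R.getD k false = true) with hFR
  set W := (Finset.range w.length).filter (fun k => w.getD k false = true) with hW
  have cW : W.card = w.count true := card_filter_getD w
  have cL : FL.card = L.count true := card_filter_getD L
  have cR : FR.card = R.count true := card_filter_getD R
  set U : Finset ℤ := (FL.image (fun k : ℕ => h - 1 - (k : ℤ)) ∪ FR.image (fun k : ℕ => h + 1 + (k : ℤ))) ∪
    (if tape h = true then {h} else ∅) with hU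
  have cU : U.card ≤ FL.card + FR.card + (tape h).toNat := by
    refine (Finset.card_union_le _ _).trans (Nat.add_le_add ((Finset.card_union_le _ _).trans
      (Nat.add_le_add Finset.card_image_le Finset.card_image_le)) ?_)
    cases tape h <;> simp
  have getD_lt : ∀ (l : List Bool) (n : ℕ), l.getD n false = true → n < l.length := by
    intro l n hn
    by_contra hc
    rw [List.getD_eq_default _ _ (by omega)] at hn
    cases hn
  have hsub : W.card ≤ U.card := by
    apply Finset.card_le_card_of_injOn (fun k : ℕ => i + (k : ℤ))
    · intro k hk
      have hk := Finset.mem_filter.1 (Finset.mem_coe.1 hk)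
      have ht : tape (i + k) = true := by
        rw [← h1 k (Finset.mem_range.1 hk.1)]; exact hk.2
      apply Finset.mem_coe.2
      change i + (k : ℤ) ∈ U
      generalize i + (k : ℤ) = x at ht
      rcases lt_trichotomy x h with hx | hx | hx
      · obtain ⟨n, hn⟩ := Int.eq_ofNat_of_zero_le (show 0 ≤ h - 1 - x by omega)
        have e : x = h - 1 - (n : ℤ) := by omega
        have := congrFun hL n
        simp only [← e, ht, lf] at this
        apply Finset.mem_union_left
        apply Finset.mem_union_left
        rw [Finset.mem_image]
        exact ⟨n, Finset.mem_filter.2 ⟨Finset.mem_range.2 (getD_lt _ _ this.symm), this.symm⟩, e.symm⟩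
      · subst hx
        apply Finset.mem_union_right
        simp [ht]
      · obtain ⟨n, hn⟩ := Int.eq_ofNat_of_zero_le (show 0 ≤ x - h - 1 by omega)
        have e : x = h + 1 + (n : ℤ) := by omega
        have := congrFun hR n
        simp only [← e, ht, lf] at this
        apply Finset.mem_union_left
        apply Finset.mem_union_right
        rw [Finset.mem_image]
        exact ⟨n, Finset.mem_filter.2 ⟨Finset.mem_range.2 (getD_lt _ _ this.symm), this.symm⟩, e.symm⟩
    · intro a _ b _ hab
      have hab : i + (a : ℤ) = i + (b : ℤ) := hab
      omega
  omega

theorem upper {k : ℕ} (hk0 : 0 < k) (hk : k ≤ 3) (f : Fin k × Bool → Option (Fin k × Bool × Dir))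
    (w : List Bool) (t : ℕ) (h : Computes f ⟨0, hk0⟩ w t) :
    w.count true ≤ (if k = 1 then 1 else if k = 2 then 4 else 6) := by
  obtain ⟨c, hs, hh, hw⟩ := h
  have H := halts_of_steps hk f c hh (t + 1) t _ (by omega) hs
  have e : toConf (initCfg (⟨0, hk0⟩ : Fin k)) = Conf.ini := rfl
  rw [e] at H
  refine count_le c.tape c.head w hw _ ?_
  split_ifs with h1 h2
  · refine bound1 _ ?_ _ _ _ H
    intro q s m hm
    obtain ⟨q', hq'⟩ := effG_move _ _ _ _ _ hm
    rw [hq']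
    have : (q' : ℕ) = 0 := by omega
    rw [this]; exact List.mem_singleton.2 rfl
  · refine bound2 _ ?_ _ _ _ H
    intro q s m hm
    obtain ⟨q', hq'⟩ := effG_move _ _ _ _ _ hm
    rw [hq']
    have : (q' : ℕ) = 0 ∨ (q' : ℕ) = 1 := by omega
    rcases this with e | e <;> rw [e]
    · exact List.mem_cons_self
    · exact List.mem_cons_of_mem _ List.mem_cons_self
  · exact bound3 _ _ _ _ H

/-! ### Explicit machines -/

def nxtL (d : Dir) (b : Bool) (L : List Bool) (R : List Bool) : List Bool × Bool × List Bool :=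
  match d with
  | .stay => (L, b, R)
  | .left => (L.tail, L.headD false, b :: R)
  | .right => (b :: L, R.headD false, R.tail)

def runZ {k : ℕ} (f : Fin k × Bool → Option (Fin k × Bool × Dir)) :
    ℕ → Fin k → List Bool → Bool → List Bool → Option (Fin k × List Bool × Bool × List Bool)
  | 0, q, L, s, R => some (q, L, s, R)
  | t + 1, q, L, s, R =>
    match f (q, s) with
    | none => none
    | some (q', b, d) =>
      match nxtL d b L R with
      | (L', s', R') => runZ f t q' L' s' R'

def Rep {k : ℕ} (c : Cfg (Fin k)) (q : Fin k) (L : List Bool) (s : Bool) (R : List Bool) : Prop :=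
  c.state = q ∧ (∀ i : ℕ, c.tape (c.head - 1 - i) = L.getD i false) ∧ c.tape c.head = s ∧
    (∀ i : ℕ, c.tape (c.head + 1 + i) = R.getD i false)

theorem getD_tail (L : List Bool) (i : ℕ) : L.tail.getD i false = L.getD (i + 1) false := by
  cases L <;> simp

theorem headD_getD (L : List Bool) : L.headD false = L.getD 0 false := by
  cases L <;> simp

theorem runZ_spec {k : ℕ} (f : Fin k × Bool → Option (Fin k × Bool × Dir)) (t : ℕ) :
    ∀ (c : Cfg (Fin k)) q L s R q' L' s' R', Rep c q L s R →
    runZ f t q L s R = some (q', L', s', R') →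
    ∃ c', stepsTM f t c = some c' ∧ Rep c' q' L' s' R' := by
  induction t with
  | zero =>
    intro c q L s R q' L' s' R' hr h
    simp only [runZ, Option.some.injEq, Prod.mk.injEq] at h
    obtain ⟨rfl, rfl, rfl, rfl⟩ := h
    exact ⟨c, rfl, hr⟩
  | succ t ih =>
    intro c q L s R q' L' s' R' hr h
    obtain ⟨r1, r2, r3, r4⟩ := hr
    rcases hf : f (q, s) with _ | ⟨q1, b, d⟩
    · simp [runZ, hf] at h
    · simp only [runZ, hf] at h
      have hst : stepTM f c =
          some ⟨q1, c.head + d.move, Function.update c.tape c.head b⟩ := by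
        simp [stepTM, r1, r3, hf]
      have : stepsTM f (t + 1) c =
          stepsTM f t ⟨q1, c.head + d.move, Function.update c.tape c.head b⟩ := by
        simp [stepsTM, hst]
      rw [this]
      refine ih _ _ _ _ _ _ _ _ _ ?_ h
      cases d with
      | stay =>
        refine ⟨rfl, ?_, ?_, ?_⟩
        · intro i
          simp only [Dir.move, add_zero, nxtL]
          rw [Function.update_of_ne (by omega), r2]
        · simp [Dir.move, nxtL]
        · intro i
          simp only [Dir.move, add_zero, nxtL]
          rw [Function.update_of_ne (by omega), r4]
      | left =>
        refine ⟨rfl, ?_, ?_, ?_⟩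
        · intro i
          simp only [Dir.move, nxtL]
          rw [Function.update_of_ne (by omega), getD_tail, ← r2]
          congr 1; push_cast; ring
        · simp only [Dir.move, nxtL]
          rw [Function.update_of_ne (by omega), headD_getD, ← r2]
          congr 1; push_cast; ring
        · intro i
          simp only [Dir.move, nxtL]
          cases i with
          | zero => simp
          | succ i =>
            rw [Function.update_of_ne (by push_cast; omega), List.getD_cons_succ, ← r4]
            congr 1; push_cast; ring
      | right =>
        refine ⟨rfl, ?_, ?_, ?_⟩
        · intro i
          simp only [Dir.move, nxtL]
          cases i with
          | zero => simp
          | succ i =>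
            rw [Function.update_of_ne (by push_cast; omega), List.getD_cons_succ, ← r2]
            congr 1; push_cast; ring
        · simp only [Dir.move, nxtL]
          rw [Function.update_of_ne (by omega), headD_getD, ← r4]
          congr 1; push_cast; ring
        · intro i
          simp only [Dir.move, nxtL]
          rw [Function.update_of_ne (by omega), getD_tail, ← r4]
          congr 1; push_cast; ring

def tabF {k : ℕ} (tab : List (Option (Fin k × Bool × Dir))) :
    Fin k × Bool → Option (Fin k × Bool × Dir) :=
  fun p => tab.getD (2 * p.1 + p.2.toNat) none

/-- The tape, read from the left end of the stored region. -/
theorem tape_full {k : ℕ} {c : Cfg (Fin k)} {q : Fin k} {L : List Bool} {s : Bool} {R : List Bool}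
    (h : Rep c q L s R) (j : ℕ) :
    c.tape (c.head - L.length + j) = (L.reverse ++ s :: R).getD j false := by
  obtain ⟨_, r2, r3, r4⟩ := h
  rcases lt_trichotomy j L.length with hj | hj | hj
  · rw [List.getD_append _ _ _ _ (by simpa using hj), List.getD_eq_getElem _ _ (by simpa using hj),
      List.getElem_reverse]
    have := r2 (L.length - 1 - j)
    rw [List.getD_eq_getElem _ _ (by omega)] at this
    rw [← this]
    congr 1; omega
  · subst hj
    rw [List.getD_append_right _ _ _ _ (by simp)]
    simp [r3]
  · obtain ⟨n, rfl⟩ : ∃ n, j = L.length + 1 + n := ⟨j - L.length - 1, by omega⟩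
    rw [List.getD_append_right _ _ _ _ (by simp; omega)]
    have e : L.length + 1 + n - L.reverse.length = n + 1 := by simp; omega
    rw [e, List.getD_cons_succ, ← r4]
    congr 1; push_cast; ring

theorem tape_out {k : ℕ} {c : Cfg (Fin k)} {q : Fin k} {L : List Bool} {s : Bool} {R : List Bool}
    (h : Rep c q L s R) (x : ℤ) (hx : c.tape x = true) : c.head - L.length ≤ x := by
  by_contra hc
  obtain ⟨n, hn⟩ := Int.eq_ofNat_of_zero_le (show 0 ≤ c.head - 1 - x by omega)
  have := h.2.1 n
  rw [List.getD_eq_default _ _ (by omega)] at this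
  have e : c.head - 1 - (n : ℤ) = x := by omega
  rw [e, hx] at this
  cases this

theorem computes_of {k : ℕ} (hk : 0 < k) (tab : List (Option (Fin k × Bool × Dir))) (t : ℕ)
    (q : Fin k) (L : List Bool) (s : Bool) (R : List Bool) (a c : ℕ) (w : List Bool)
    (h1 : runZ (tabF tab) t ⟨0, hk⟩ [] false [] = some (q, L, s, R))
    (h2 : (tabF tab (q, s)).isNone = true)
    (h3 : L.reverse ++ s :: R = List.replicate a false ++ (w ++ List.replicate c false))
    (h4 : w.getD 0 false = true ∧ w.getLastD false = true) :
    Computes (tabF tab) ⟨0, hk⟩ w t := by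
  have h0 : Rep (initCfg (⟨0, hk⟩ : Fin k)) ⟨0, hk⟩ [] false [] :=
    ⟨rfl, fun i => by simp [initCfg], rfl, fun i => by simp [initCfg]⟩
  obtain ⟨c', hs, hr⟩ := runZ_spec _ _ _ _ _ _ _ _ _ _ _ h0 h1
  refine ⟨c', hs, ?_, c'.head - L.length + a, ?_, ?_, fun _ => h4⟩
  · unfold Halted
    rw [hr.1, hr.2.2.1]
    simpa using h2
  · intro j hj
    have := tape_full hr (a + j)
    rw [h3, List.getD_append_right _ _ _ _ (by simp)] at this
    rw [List.length_replicate, Nat.add_sub_cancel_left, List.getD_append _ _ _ _ hj] at this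
    rw [← this]
    congr 1; push_cast; ring
  · intro x hx
    have hlow := tape_out hr x hx
    obtain ⟨n, hn⟩ := Int.eq_ofNat_of_zero_le (show 0 ≤ x - (c'.head - L.length) by omega)
    have e : x = c'.head - L.length + (n : ℤ) := by omega
    have := tape_full hr n
    rw [← e, hx, h3] at this
    have hn1 : a ≤ n := by
      by_contra hc
      rw [List.getD_append _ _ _ _ (by simp; omega), List.getD_replicate _ (by omega)] at this
      cases this
    have hn2 : n < a + w.length := by
      by_contra hc
      rw [List.getD_append_right _ _ _ _ (by simp; omega),
        List.getD_append_right _ _ _ _ (by simp; omega)] at this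
      by_cases hlt : n - a - w.length < c
      · rw [List.getD_replicate _ (by simpa using hlt)] at this
        cases this
      · rw [List.getD_eq_default _ _ (by simp; omega)] at this
        cases this
    constructor <;> omega

/-- Realisability of `n` with `k` states. -/
def Real (k n : ℕ) : Prop :=
  ∃ (hk : 0 < k) (f : Fin k × Bool → Option (Fin k × Bool × Dir)) (w : List Bool) (t : ℕ),
    Computes f ⟨0, hk⟩ w t ∧ w.count true = n

theorem real_1 : Real 1 1 :=
  ⟨by norm_num, _, _, _, computes_of (by norm_num)
    [some (0, true, .stay), none] 1 0
    [] true
    [] 0 0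
    [true]
    (by decide +kernel) (by decide +kernel) (by decide +kernel) (by decide +kernel), by decide +kernel⟩

theorem real_2 : Real 2 2 :=
  ⟨by norm_num, _, _, _, computes_of (by norm_num)
    [some (1, true, .left), none, some (1, true, .right), none] 2 1
    [true] true
    [] 0 0
    [true, true]
    (by decide +kernel) (by decide +kernel) (by decide +kernel) (by decide +kernel), by decide +kernel⟩

theorem real_3 : Real 2 3 :=
  ⟨by norm_num, _, _, _, computes_of (by norm_num)
    [some (1, true, .left), some (0, true, .right), some (0, true, .right), none] 4 1
    [true] true
    [true] 0 0
    [true, true, true]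
    (by decide +kernel) (by decide +kernel) (by decide +kernel) (by decide +kernel), by decide +kernel⟩

theorem real_4 : Real 2 4 :=
  ⟨by norm_num, _, _, _, computes_of (by norm_num)
    [some (1, true, .left), some (1, true, .right), some (0, true, .right), none] 5 1
    [true, true] true
    [true] 0 0
    [true, true, true, true]
    (by decide +kernel) (by decide +kernel) (by decide +kernel) (by decide +kernel), by decide +kernel⟩

theorem real_5 : Real 3 5 :=
  ⟨by norm_num, _, _, _, computes_of (by norm_num)
    [some (2, true, .right), none, some (0, true, .left), some (2, true, .left), some (1, true, .left), none] 6 2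
    [true] true
    [true, true, true] 0 0
    [true, true, true, true, true]
    (by decide +kernel) (by decide +kernel) (by decide +kernel) (by decide +kernel), by decide +kernel⟩

theorem real_6 : Real 3 6 :=
  ⟨by norm_num, _, _, _, computes_of (by norm_num)
    [some (1, true, .left), some (2, true, .right), some (2, true, .left), none, some (0, true, .right), some (1, false, .right)] 10 1
    [true, true, true, true] true
    [true] 0 0
    [true, true, true, true, true, true]
    (by decide +kernel) (by decide +kernel) (by decide +kernel) (by decide +kernel), by decide +kernel⟩

theorem real_7 : Real 4 7 :=
  ⟨by norm_num, _, _, _, computes_of (by norm_num)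
    [some (3, true, .left), none, some (3, true, .right), none, some (1, true, .right), some (3, false, .right), some (1, true, .left), some (2, true, .right)] 11 1
    [true, true, true, true, true] true
    [true] 0 0
    [true, true, true, true, true, true, true]
    (by decide +kernel) (by decide +kernel) (by decide +kernel) (by decide +kernel), by decide +kernel⟩

theorem real_8 : Real 4 8 :=
  ⟨by norm_num, _, _, _, computes_of (by norm_num)
    [some (2, true, .left), some (3, true, .left), some (0, true, .left), some (2, true, .right), some (1, true, .right), none, some (1, true, .left), some (3, true, .left)] 13 2
    [true, true] true
    [true, true, true, true, true] 0 0
    [true, true, true, true, true, true, true, true]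
    (by decide +kernel) (by decide +kernel) (by decide +kernel) (by decide +kernel), by decide +kernel⟩

theorem real_9 : Real 4 9 :=
  ⟨by norm_num, _, _, _, computes_of (by norm_num)
    [some (1, true, .left), some (3, true, .left), some (2, true, .right), some (1, false, .right), some (0, true, .left), some (0, true, .right), some (2, true, .left), none] 18 3
    [true] true
    [true, true, true, true, true, true, true] 0 0
    [true, true, true, true, true, true, true, true, true]
    (by decide +kernel) (by decide +kernel) (by decide +kernel) (by decide +kernel), by decide +kernel⟩

theorem real_10 : Real 4 10 :=
  ⟨by norm_num, _, _, _, computes_of (by norm_num)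
    [some (1, true, .right), some (2, false, .right), some (3, true, .left), some (0, true, .right), some (0, true, .left), none, some (2, false, .left), some (3, true, .left)] 29 2
    [false, true, true, true, true] true
    [true, true, true, true, true] 0 0
    [true, true, true, true, false, true, true, true, true, true, true]
    (by decide +kernel) (by decide +kernel) (by decide +kernel) (by decide +kernel), by decide +kernel⟩

theorem real_11 : Real 4 11 :=
  ⟨by norm_num, _, _, _, computes_of (by norm_num)
    [some (3, true, .left), some (0, false, .right), some (3, true, .right), some (1, true, .right), some (1, true, .right), some (0, false, .left), some (2, true, .left), none] 42 3
    [true, true, true, true] true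
    [true, true, true, true, true, true] 0 0
    [true, true, true, true, true, true, true, true, true, true, true]
    (by decide +kernel) (by decide +kernel) (by decide +kernel) (by decide +kernel), by decide +kernel⟩

theorem real_12 : Real 4 12 :=
  ⟨by norm_num, _, _, _, computes_of (by norm_num)
    [some (1, true, .right), some (1, true, .left), some (0, true, .left), some (2, false, .left), none, some (3, true, .left), some (3, true, .right), some (0, false, .right)] 106 2
    [] false
    [false, true, true, true, true, true, true, true, true, true, true, true, true] 2 0
    [true, true, true, true, true, true, true, true, true, true, true, true]
    (by decide +kernel) (by decide +kernel) (by decide +kernel) (by decide +kernel), by decide +kernel⟩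

end PP

/-- for every natural number `n` with `1 ≤ n ≤ 12`, the Placid
Platypus function `PP(n)`, i.e. the least number `k` of states of a Turing
machine halting on the all-zero tape with exactly `n` ones in its computed
word, satisfies: `PP(1) = 1`, `PP(n) = 2` for `2 ≤ n ≤ 4`, `PP(n) = 3` for
`5 ≤ n ≤ 6`, and `PP(n) = 4` for `7 ≤ n ≤ 12`. -/
theorem placid_platypus_values (n : ℕ) (h1 : 1 ≤ n) (h2 : n ≤ 12) :
    IsLeast
      {k : ℕ |
        ∃ (hk : 0 < k)
          (f : Fin k × Bool → Option (Fin k × Bool × Dir)) (w : List Bool) (t : ℕ),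
          Computes f ⟨0, hk⟩ w t ∧ w.count true = n}
      (if n = 1 then 1 else if n ≤ 4 then 2 else if n ≤ 6 then 3 else 4) := by
  have hreal : PP.Real (if n = 1 then 1 else if n ≤ 4 then 2 else if n ≤ 6 then 3 else 4) n := by
    interval_cases n
    · exact PP.real_1
    · exact PP.real_2
    · exact PP.real_3
    · exact PP.real_4
    · exact PP.real_5
    · exact PP.real_6
    · exact PP.real_7
    · exact PP.real_8
    · exact PP.real_9
    · exact PP.real_10
    · exact PP.real_11
    · exact PP.real_12
  refine ⟨hreal, ?_⟩
  rintro k ⟨hk, f, w, t, hc, hn⟩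
  by_contra hlt
  have hk3 : k ≤ 3 := by split_ifs at hlt <;> omega
  have := PP.upper hk hk3 f w t hc
  rw [hn] at this
  split_ifs at hlt this <;> omega
end
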